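/- arXiv:2512.08151 — 2 statements merged into one kernel-verified Lean document; each statement's English description precedes it below -/
import Mathlib

section
/- For i = 1, 2, let Γ_i be a finitely generated virtually abelian group, and let ν be an aperiodic probability measure on Γ₁×Γ₂ with finite second moment whose support generates Γ₁×Γ₂ as a semigroup; let μ^{(i)} denote the marginal of ν on Γ_i (μ^{(1)}(γ₁) = ∑_{γ₂} ν(γ₁,γ₂) and μ^{(2)}(γ₂) = ∑_{γ₁} ν(γ₁,γ₂)). If every group homomorphism from Γ₁ to ℤ is the zero homomorphism, then ‖ν_n − μ^{(1)}_n × μ^{(2)}_n‖_TV → 0 as n → ∞. -/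
open scoped BigOperators Classical
open Filter Matrix MeasureTheory

namespace NSVA

noncomputable section

/-- Convolution of two real-valued functions on a group. -/
def conv {G : Type*} [Group G] (μ ν : G → ℝ) : G → ℝ :=
  fun g => ∑' h : G, μ h * ν (h⁻¹ * g)

/-- Convolution powers: `convPow μ 0 = δ_1`, `convPow μ (n+1) = (convPow μ n) * μ`. -/
def convPow {G : Type*} [Group G] (μ : G → ℝ) : ℕ → G → ℝ
  | 0 => fun g => if g = 1 then 1 else 0
  | n + 1 => conv (convPow μ n) μ

/-- A probability measure on a countable set, viewed as a function. -/
def IsProb {G : Type*} (μ : G → ℝ) : Prop := (∀ g, 0 ≤ μ g) ∧ HasSum μ 1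

/-- The support of `μ` generates the group as a semigroup. -/
def Nondeg {G : Type*} [Group G] (μ : G → ℝ) : Prop :=
  ∀ g : G, g ∈ Subsemigroup.closure {x : G | 0 < μ x}

/-- `μ` is aperiodic: `μ_n(1) > 0` for all large enough `n`. -/
def Aperiodic {G : Type*} [Group G] (μ : G → ℝ) : Prop :=
  ∃ N : ℕ, ∀ n : ℕ, N ≤ n → 0 < convPow μ n 1

/-- Total variation distance between two (probability) functions. -/
def tv {Z : Type*} (p q : Z → ℝ) : ℝ := (1 / 2) * ∑' z : Z, |p z - q z|

/-- Word length with respect to a finite set `S₀`. -/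
def wordLength {G : Type*} [Group G] (S₀ : Finset G) (g : G) : ℕ :=
  sInf {n : ℕ | ∃ l : List G, (∀ s ∈ l, s ∈ S₀) ∧ l.length = n ∧ l.prod = g}

/-- Finite second moment with respect to a word metric given by a finite symmetric
generating set. -/
def FinSecondMoment {G : Type*} [Group G] (μ : G → ℝ) : Prop :=
  ∃ S₀ : Finset G, (∀ s ∈ S₀, s⁻¹ ∈ S₀) ∧ Subgroup.closure (S₀ : Set G) = ⊤ ∧
    Summable (fun g : G => (wordLength S₀ g : ℝ) ^ 2 * μ g)

/-- A group is virtually abelian if it has an abelian subgroup of finite index. -/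
def VirtAbelian (G : Type*) [Group G] : Prop :=
  ∃ A : Subgroup G, A.index ≠ 0 ∧ ∀ a b : A, a * b = b * a

/-- The noised measure `π^ρ` on `G × G`. -/
def noised {G : Type*} (μ : G → ℝ) (ρ : ℝ) : G × G → ℝ :=
  fun p => ρ * μ p.1 * μ p.2 + (1 - ρ) * μ p.1 * (if p.1 = p.2 then 1 else 0)

/-- First marginal of a measure on a product. -/
def marg1 {G₁ G₂ : Type*} (ν : G₁ × G₂ → ℝ) : G₁ → ℝ := fun γ₁ => ∑' γ₂ : G₂, ν (γ₁, γ₂)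

/-- Second marginal of a measure on a product. -/
def marg2 {G₁ G₂ : Type*} (ν : G₁ × G₂ → ℝ) : G₂ → ℝ := fun γ₂ => ∑' γ₁ : G₁, ν (γ₁, γ₂)

/-- A system of representatives of the right cosets `Λ\Γ` containing the identity,
together with the representative map `rep`, constant on right cosets. -/
structure RepSystem {Γ : Type*} [Group Γ] (Λ : Subgroup Γ) where
  Δ : Finset Γ
  one_mem : (1 : Γ) ∈ Δ
  rep : Γ → Γ
  rep_mem : ∀ γ : Γ, rep γ ∈ Δ
  rep_spec : ∀ γ : Γ, γ * (rep γ)⁻¹ ∈ Λ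
  rep_idem : ∀ x ∈ Δ, rep x = x
  rep_coset : ∀ γ : Γ, ∀ v ∈ Λ, rep (v * γ) = rep γ

variable {Γ : Type*} [Group Γ] {Λ : Subgroup Γ} {m : ℕ}

/-- The cocycle `α(x,s) = ψ(x·s·(x^s)⁻¹) ∈ ℤ^m`. -/
def cocycle (ψ : Λ ≃* Multiplicative (Fin m → ℤ)) (R : RepSystem Λ) (x s : Γ) : Fin m → ℤ :=
  Multiplicative.toAdd (ψ ⟨x * s * (R.rep (x * s))⁻¹, R.rep_spec (x * s)⟩)

/-- The transfer homomorphism `θ(γ) = ∑_{x∈Δ} α(x,γ)`. -/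
def transfer (ψ : Λ ≃* Multiplicative (Fin m → ℤ)) (R : RepSystem Λ) (γ : Γ) : Fin m → ℤ :=
  ∑ x ∈ R.Δ, cocycle ψ R x γ

/-- `Φ(γ) = ψ(v)` where `γ = v·x`, `v ∈ Λ`, `x ∈ Δ`. -/
def Phi (ψ : Λ ≃* Multiplicative (Fin m → ℤ)) (R : RepSystem Λ) (γ : Γ) : Fin m → ℤ :=
  Multiplicative.toAdd (ψ ⟨γ * (R.rep γ)⁻¹, R.rep_spec γ⟩)

/-- A 1-form on the quotient diagram. -/
def IsOneForm (R : RepSystem Λ) (ω : Γ → Γ → ℝ) : Prop :=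
  ∀ x ∈ R.Δ, ∀ s : Γ, ω (R.rep (x * s)) s⁻¹ = -ω x s

/-- `χ(ω) = ∑_{x∈Δ} ∑_s c(x,s)·ω(x,s)` where `c(x,s) = μ(s)/#F`. -/
def chi (R : RepSystem Λ) (μ : Γ → ℝ) (ω : Γ → Γ → ℝ) : ℝ :=
  ∑ x ∈ R.Δ, ∑' s : Γ, μ s / (Λ.index : ℝ) * ω x s

/-- Square-integrability of a 1-form. -/
def SqInt (R : RepSystem Λ) (μ : Γ → ℝ) (ω : Γ → Γ → ℝ) : Prop :=
  ∀ x ∈ R.Δ, Summable (fun s : Γ => μ s / (Λ.index : ℝ) * ω x s ^ 2)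

/-- Harmonicity of a (square-integrable) 1-form. -/
def Harmonic (R : RepSystem Λ) (μ : Γ → ℝ) (ω : Γ → Γ → ℝ) : Prop :=
  SqInt R μ ω ∧ ∀ x ∈ R.Δ, (∑' s : Γ, μ s * ω x s) = chi R μ ω

/-- The differential `df(x,s) = f(x^s) − f(x)`. -/
def dd (R : RepSystem Λ) (f : Γ → ℝ) : Γ → Γ → ℝ := fun x s => f (R.rep (x * s)) - f x

/-- `(u, f)` is a harmonic decomposition of the 1-form `ω`: `ω = u + df` with `u`
a harmonic 1-form. -/
def IsHarmDecomp (R : RepSystem Λ) (μ : Γ → ℝ) (ω u : Γ → Γ → ℝ) (f : Γ → ℝ) : Prop :=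
  IsOneForm R u ∧ Harmonic R μ u ∧ ∀ x ∈ R.Δ, ∀ s : Γ, ω x s = u x s + dd R f x s

/-- The 1-form `v̂(x,s) = ⟨v, α(x,s)⟩` (standard inner product). -/
def vhat (ψ : Λ ≃* Multiplicative (Fin m → ℤ)) (R : RepSystem Λ) (v : Fin m → ℝ) :
    Γ → Γ → ℝ :=
  fun x s => ∑ i, v i * (cocycle ψ R x s i : ℝ)

/-- The 1-form `v̂(x,s) = B(v, α(x,s))` for a bilinear form `B`. -/
def vhatB (ψ : Λ ≃* Multiplicative (Fin m → ℤ)) (R : RepSystem Λ)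
    (B : (Fin m → ℝ) →ₗ[ℝ] (Fin m → ℝ) →ₗ[ℝ] ℝ) (v : Fin m → ℝ) : Γ → Γ → ℝ :=
  fun x s => B v (fun i => (cocycle ψ R x s i : ℝ))

/-- The drift `ζ = (1/#F)·∑_{x∈Δ}∑_s μ(s)·α(x,s) ∈ ℝ^m`. -/
def drift (ψ : Λ ≃* Multiplicative (Fin m → ℤ)) (R : RepSystem Λ) (μ : Γ → ℝ) : Fin m → ℝ :=
  fun i => (Λ.index : ℝ)⁻¹ * ∑ x ∈ R.Δ, ∑' s : Γ, μ s * (cocycle ψ R x s i : ℝ)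

/-- The covariance pairing `∑_{x,s} c(x,s)·u(x,s)·u'(x,s) − χ(u)·χ(u')`. -/
def cov (R : RepSystem Λ) (μ : Γ → ℝ) (u u' : Γ → Γ → ℝ) : ℝ :=
  (∑ x ∈ R.Δ, ∑' s : Γ, μ s / (Λ.index : ℝ) * (u x s * u' x s)) - chi R μ u * chi R μ u'

/-- The transfer operator `ℒ_v` acting on functions `Δ → ℂ`. -/
def transferOp (ψ : Λ ≃* Multiplicative (Fin m → ℤ)) (R : RepSystem Λ) (μ : Γ → ℝ)
    (v : Fin m → ℝ) (f : Γ → ℂ) : Γ → ℂ :=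
  fun x => ∑' s : Γ, (μ s : ℂ) *
    Complex.exp (2 * Real.pi * Complex.I * ((∑ i, v i * (cocycle ψ R x s i : ℝ)) : ℝ)) *
    f (R.rep (x * s))

/-- The Gaussian density `ξ_A(w)` associated with a (positive-definite) matrix `A`. -/
def gauss {d : ℕ} (A : Matrix (Fin d) (Fin d) ℝ) (w : Fin d → ℝ) : ℝ :=
  (2 * Real.pi) ^ (-(d : ℝ) / 2) * A.det ^ (-(1 : ℝ) / 2) *
    Real.exp (-(w ⬝ᵥ A⁻¹.mulVec w) / 2)

/-- The product representative system for `Λ₁ × Λ₂ ≤ Γ₁ × Γ₂`. -/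
def prodRep {Γ₁ : Type*} [Group Γ₁] {Γ₂ : Type*} [Group Γ₂]
    {Λ₁ : Subgroup Γ₁} {Λ₂ : Subgroup Γ₂}
    (R₁ : RepSystem Λ₁) (R₂ : RepSystem Λ₂) : RepSystem (Λ₁.prod Λ₂) where
  Δ := R₁.Δ ×ˢ R₂.Δ
  one_mem := Finset.mem_product.mpr ⟨R₁.one_mem, R₂.one_mem⟩
  rep := fun p => (R₁.rep p.1, R₂.rep p.2)
  rep_mem := fun p => Finset.mem_product.mpr ⟨R₁.rep_mem p.1, R₂.rep_mem p.2⟩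
  rep_spec := fun p => Subgroup.mem_prod.mpr ⟨R₁.rep_spec p.1, R₂.rep_spec p.2⟩
  rep_idem := fun x hx => by
    rcases Finset.mem_product.mp hx with ⟨h1, h2⟩
    exact Prod.ext_iff.mpr ⟨R₁.rep_idem x.1 h1, R₂.rep_idem x.2 h2⟩
  rep_coset := fun p v hv => by
    rcases Subgroup.mem_prod.mp hv with ⟨h1, h2⟩
    exact Prod.ext_iff.mpr ⟨R₁.rep_coset p.1 v.1 h1, R₂.rep_coset p.2 v.2 h2⟩

/-- The 1-form `𝐯̂(x,s) = ⟨𝐯, α(x,s)⟩` on a product, standard inner product. -/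
def vhat2 {Γ₁ : Type*} [Group Γ₁] {Γ₂ : Type*} [Group Γ₂]
    {Λ₁ : Subgroup Γ₁} {Λ₂ : Subgroup Γ₂} {m₁ m₂ : ℕ}
    (ψ₁ : Λ₁ ≃* Multiplicative (Fin m₁ → ℤ)) (R₁ : RepSystem Λ₁)
    (ψ₂ : Λ₂ ≃* Multiplicative (Fin m₂ → ℤ)) (R₂ : RepSystem Λ₂)
    (v : (Fin m₁ → ℝ) × (Fin m₂ → ℝ)) : (Γ₁ × Γ₂) → (Γ₁ × Γ₂) → ℝ :=
  fun x s => (∑ i, v.1 i * (cocycle ψ₁ R₁ x.1 s.1 i : ℝ)) +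
    ∑ i, v.2 i * (cocycle ψ₂ R₂ x.2 s.2 i : ℝ)

/-- The 1-form `𝐯̂(x,s) = ⟨𝐯, α(x,s)⟩` on a product, orthogonal-sum of the two
bilinear forms `B₁`, `B₂`. -/
def vhatB2 {Γ₁ : Type*} [Group Γ₁] {Γ₂ : Type*} [Group Γ₂]
    {Λ₁ : Subgroup Γ₁} {Λ₂ : Subgroup Γ₂} {m₁ m₂ : ℕ}
    (ψ₁ : Λ₁ ≃* Multiplicative (Fin m₁ → ℤ)) (R₁ : RepSystem Λ₁)
    (B₁ : (Fin m₁ → ℝ) →ₗ[ℝ] (Fin m₁ → ℝ) →ₗ[ℝ] ℝ)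
    (ψ₂ : Λ₂ ≃* Multiplicative (Fin m₂ → ℤ)) (R₂ : RepSystem Λ₂)
    (B₂ : (Fin m₂ → ℝ) →ₗ[ℝ] (Fin m₂ → ℝ) →ₗ[ℝ] ℝ)
    (v : (Fin m₁ → ℝ) × (Fin m₂ → ℝ)) : (Γ₁ × Γ₂) → (Γ₁ × Γ₂) → ℝ :=
  fun x s => B₁ v.1 (fun i => (cocycle ψ₁ R₁ x.1 s.1 i : ℝ)) +
    B₂ v.2 (fun i => (cocycle ψ₂ R₂ x.2 s.2 i : ℝ))

end

/-!
A free abelian subgroup `ℤ^ι` of finite index identifies `G` with `X × ℤ^ι`, where `X` is the finite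
coset space, through a cocycle `val : X → G → ℤ^ι` over the action of `G` on `X`. Powers of the
transition operator on `ℂ^X` twisted by `⟨v, val⟩` compute the characteristic function of the walk.
Subtracting a constant and a coboundary from `⟨v, val⟩` makes it a martingale increment, and a
central limit theorem for the twisted operators shows that only the constant, the coboundary and
the limiting variance matter asymptotically. A Gaussian bound on the powers upgrades this, by
Fourier inversion and dominated convergence, to a comparison of two walks up to `o(n^(-m/2))`,
`m = #ι`, uniformly in the group element; as both walks live at scale `√n`, Chebyshev's inequality
gives convergence in total variation.

For `ν` and the product of its marginals, the constant and the coboundary agree. The limiting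
variances differ by the covariance between `∑ x, ⟨v, val x ·⟩` on `Γ₁` and a functional on `Γ₂`;
but `∑ x, val x ·` is the transfer, a homomorphism from `Γ₁` to `ℤ^ι`, hence zero.
-/

section Expectation

variable {G : Type*} {p : G → ℝ} {E : Type*} [NormedAddCommGroup E] [NormedSpace ℝ E]
  {f : G → E} {C : ℝ}

lemma IsProb.le_one (hp : IsProb p) (g : G) : p g ≤ 1 :=
  le_hasSum hp.2 g fun j _ => hp.1 j

lemma IsProb.norm_smul_le (hp : IsProb p) (hf : ∀ g, ‖f g‖ ≤ C) (g : G) :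
    ‖p g • f g‖ ≤ p g * C := by
  rw [norm_smul, Real.norm_of_nonneg (hp.1 g)]
  exact mul_le_mul_of_nonneg_left (hf g) (hp.1 g)

lemma IsProb.summable_smul [CompleteSpace E] (hp : IsProb p) (hf : ∀ g, ‖f g‖ ≤ C) :
    Summable fun g => p g • f g :=
  .of_norm_bounded (hp.2.summable.mul_right C) (hp.norm_smul_le hf)

lemma IsProb.norm_tsum_smul_le (hp : IsProb p) (hf : ∀ g, ‖f g‖ ≤ C) :
    ‖∑' g, p g • f g‖ ≤ C := by
  simpa only [one_mul] using tsum_of_norm_bounded (hp.2.mul_right C) (hp.norm_smul_le hf)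

lemma IsProb.tsum_smul_const (hp : IsProb p) (e : E) : ∑' g, p g • e = e := by
  simpa only [one_smul] using (hp.2.smul_const e).tsum_eq

-- Doeblin's minorization: the uniform part of `p` on `S` is averaged separately.
lemma IsProb.norm_tsum_smul_le_of_le [CompleteSpace E] (hp : IsProb p) (hf : ∀ g, ‖f g‖ ≤ C)
    (S : Finset G) {a : ℝ} (ha : 0 ≤ a) (hS : ∀ g ∈ S, a ≤ p g) :
    ‖∑' g, p g • f g‖ ≤ (1 - a * S.card) * C + a * ‖∑ g ∈ S, f g‖ := by
  let r : G → ℝ := fun g => if g ∈ S then a else 0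
  have hr0 : ∀ g ∉ S, r g = 0 := fun g hg => if_neg hg
  have hra : ∀ g ∈ S, r g = a := fun g hg => if_pos hg
  have hr : HasSum r (a * S.card) := by
    have hsum : HasSum r (∑ g ∈ S, r g) := hasSum_sum_of_ne_finset_zero hr0
    rwa [Finset.sum_congr rfl hra, Finset.sum_const, nsmul_eq_mul, mul_comm] at hsum
  have hrf : HasSum (fun g => r g • f g) (a • ∑ g ∈ S, f g) := by
    have hsum : HasSum (fun g => r g • f g) (∑ g ∈ S, r g • f g) :=
      hasSum_sum_of_ne_finset_zero fun g hg => by rw [hr0 g hg, zero_smul]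
    rwa [Finset.sum_congr rfl fun g hg => congrArg (· • f g) (hra g hg), ← Finset.smul_sum] at hsum
  have hrp : ∀ g, 0 ≤ p g - r g := fun g => by
    by_cases hg : g ∈ S
    · simpa only [hra g hg, sub_nonneg] using hS g hg
    · simpa only [hr0 g hg, sub_zero] using hp.1 g
  have hrest : ‖∑' g, p g • f g - a • ∑ g ∈ S, f g‖ ≤ (1 - a * S.card) * C := by
    rw [← ((hp.summable_smul hf).hasSum.sub hrf).tsum_eq]
    refine tsum_of_norm_bounded ((hp.2.sub hr).mul_right C) fun g => ?_
    rw [← sub_smul, norm_smul, Real.norm_of_nonneg (hrp g)]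
    exact mul_le_mul_of_nonneg_left (hf g) (hrp g)
  calc ‖∑' g, p g • f g‖
      ≤ ‖∑' g, p g • f g - a • ∑ g ∈ S, f g‖ + ‖a • ∑ g ∈ S, f g‖ := norm_le_norm_sub_add _ _
    _ ≤ (1 - a * S.card) * C + a * ‖∑ g ∈ S, f g‖ := by
        rw [norm_smul, Real.norm_of_nonneg ha]
        gcongr

end Expectation

section Convolution

variable {G : Type*} [Group G] {p q : G → ℝ} {E : Type*} [NormedAddCommGroup E] [NormedSpace ℝ E]
  {f : G → E}

lemma IsProb.summable_conv (hp : IsProb p) (hq : IsProb q) (g : G) :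
    Summable fun h => p h * q (h⁻¹ * g) :=
  .of_nonneg_of_le (fun _ => mul_nonneg (hp.1 _) (hq.1 _))
    (fun _ => mul_le_of_le_one_right (hp.1 _) (hq.le_one _)) hp.2.summable

lemma IsProb.tsum_mul_smul_eq_conv_smul (hp : IsProb p) (hq : IsProb q) (f : G → E) (g : G) :
    ∑' h, (p h * q (h⁻¹ * g)) • f g = conv p q g • f g :=
  (hp.summable_conv hq g).tsum_smul_const _

lemma summable_mul_smul_comp_mul_iff :
    (Summable fun z : G × G => (p z.1 * q z.2) • f (z.1 * z.2)) ↔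
      Summable fun z : G × G => (p z.1 * q (z.1⁻¹ * z.2)) • f z.2 := by
  rw [← (Equiv.prodShear (Equiv.refl G) Equiv.mulLeft).summable_iff
    (f := fun z : G × G => (p z.1 * q (z.1⁻¹ * z.2)) • f z.2)]
  simp only [Function.comp_def, Equiv.prodShear_apply, Equiv.refl_apply, Equiv.coe_mulLeft,
    inv_mul_cancel_left]

lemma IsProb.summable_conv_smul [CompleteSpace E] (hp : IsProb p) (hq : IsProb q)
    (h : Summable fun z : G × G => (p z.1 * q z.2) • f (z.1 * z.2)) :
    Summable fun g => conv p q g • f g :=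
  (summable_mul_smul_comp_mul_iff.1 h).prod_symm.prod.congr fun g =>
    hp.tsum_mul_smul_eq_conv_smul hq f g

lemma IsProb.tsum_conv_smul [CompleteSpace E] (hp : IsProb p) (hq : IsProb q)
    (h : Summable fun z : G × G => (p z.1 * q z.2) • f (z.1 * z.2)) :
    ∑' g, conv p q g • f g = ∑' g, p g • ∑' s, q s • f (g * s) := by
  calc ∑' g, conv p q g • f g
      = ∑' g, ∑' h, (p h * q (h⁻¹ * g)) • f g :=
        tsum_congr fun g => (hp.tsum_mul_smul_eq_conv_smul hq f g).symm
    _ = ∑' h, ∑' g, (p h * q (h⁻¹ * g)) • f g := (summable_mul_smul_comp_mul_iff.1 h).tsum_comm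
    _ = ∑' h, ∑' s, (p h * q s) • f (h * s) := tsum_congr fun h => by
        rw [← (Equiv.mulLeft h).tsum_eq]
        simp only [Equiv.coe_mulLeft, inv_mul_cancel_left]
    _ = ∑' h, p h • ∑' s, q s • f (h * s) := tsum_congr fun h => by
        simp only [mul_smul, tsum_const_smul'']

lemma IsProb.summable_mul_smul [CompleteSpace E] (hp : IsProb p) (hq : IsProb q) {C : ℝ}
    (hf : ∀ g, ‖f g‖ ≤ C) : Summable fun z : G × G => (p z.1 * q z.2) • f (z.1 * z.2) := by
  have hpq : ∀ z : G × G, 0 ≤ p z.1 * q z.2 := fun z => mul_nonneg (hp.1 _) (hq.1 _)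
  refine .of_norm_bounded
    ((hp.2.summable.mul_of_nonneg hq.2.summable hp.1 hq.1).mul_right C) fun z => ?_
  rw [norm_smul, Real.norm_of_nonneg (hpq z)]
  exact mul_le_mul_of_nonneg_left (hf _) (hpq z)

lemma isProb_conv (hp : IsProb p) (hq : IsProb q) : IsProb (conv p q) := by
  let one : G → ℝ := fun _ => 1
  have hsum := hp.summable_mul_smul hq (f := one) fun _ => norm_one.le
  have hconv := (hp.summable_conv_smul (f := one) hq hsum).hasSum
  rw [hp.tsum_conv_smul (f := one) hq hsum] at hconv
  simp only [one, smul_eq_mul, mul_one, hq.2.tsum_eq, hp.2.tsum_eq] at hconv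
  exact ⟨fun g => tsum_nonneg fun h => mul_nonneg (hp.1 _) (hq.1 _), hconv⟩

lemma isProb_convPow (hp : IsProb p) (n : ℕ) : IsProb (convPow p n) := by
  induction n with
  | zero => exact ⟨fun g => by unfold convPow; split_ifs <;> simp, hasSum_ite_eq 1 1⟩
  | succ n ih => exact isProb_conv ih hp

lemma tsum_convPow_zero_smul (f : G → E) : ∑' g, convPow p 0 g • f g = f 1 := by
  simp only [convPow, ite_smul, one_smul, zero_smul, tsum_ite_eq]

lemma IsProb.conv_pos_iff (hp : IsProb p) (hq : IsProb q) {g : G} :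
    0 < conv p q g ↔ ∃ h, 0 < p h ∧ 0 < q (h⁻¹ * g) := by
  have hpq : ∀ h, 0 ≤ p h * q (h⁻¹ * g) := fun h => mul_nonneg (hp.1 _) (hq.1 _)
  have hzero : conv p q g = 0 ↔ ∀ h, p h * q (h⁻¹ * g) = 0 := by
    rw [conv, ← (hp.summable_conv hq g).hasSum_iff, hasSum_zero_iff_of_nonneg hpq, funext_iff]
    rfl
  rw [((isProb_conv hp hq).1 g).lt_iff_ne', Ne, hzero, not_forall]
  exact exists_congr fun h => by
    rw [mul_eq_zero, not_or, (hp.1 h).lt_iff_ne', (hq.1 _).lt_iff_ne']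

lemma convPow_one (p : G → ℝ) : convPow p 1 = p := by
  funext g
  simp only [convPow, conv, ite_mul, one_mul, zero_mul, tsum_ite_eq, inv_one]

lemma IsProb.convPow_add_pos (hp : IsProb p) {m n : ℕ} {g h : G} (hg : 0 < convPow p m g)
    (hh : 0 < convPow p n h) : 0 < convPow p (m + n) (g * h) := by
  induction n generalizing h with
  | zero =>
    obtain rfl : h = 1 := by
      by_contra hne
      simp [convPow, hne] at hh
    rwa [mul_one]
  | succ n ih =>
    obtain ⟨k, hk, hkh⟩ := ((isProb_convPow hp n).conv_pos_iff hp).1 hh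
    refine ((isProb_convPow hp (m + n)).conv_pos_iff hp).2 ⟨g * k, ih hk, ?_⟩
    rwa [_root_.mul_inv_rev, mul_assoc, inv_mul_cancel_left]

/-- Every element is charged by all sufficiently large convolution powers of `p`; for a probability
measure this is what aperiodicity and nondegeneracy amount to. -/
def EventuallyPos (p : G → ℝ) : Prop := ∀ g, ∀ᶠ n in atTop, 0 < convPow p n g

lemma Nondeg.exists_convPow_pos (hn : Nondeg p) (hp : IsProb p) (g : G) :
    ∃ n, 0 < convPow p n g := by
  induction hn g using Subsemigroup.closure_induction with
  | mem x hx => exact ⟨1, by rwa [convPow_one]⟩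
  | mul x y _ _ hx hy =>
    obtain ⟨m, hm⟩ := hx
    obtain ⟨n, hn⟩ := hy
    exact ⟨m + n, hp.convPow_add_pos hm hn⟩

lemma Nondeg.eventuallyPos (hn : Nondeg p) (hp : IsProb p) (ha : Aperiodic p) :
    EventuallyPos p := fun g => by
  obtain ⟨k, hk⟩ := hn.exists_convPow_pos hp g
  obtain ⟨N, hN⟩ := ha
  filter_upwards [eventually_ge_atTop (N + k)] with n hn
  simpa only [mul_one, Nat.add_sub_cancel' (le_of_add_le_right hn)] using
    hp.convPow_add_pos hk (hN (n - k) (Nat.le_sub_of_add_le hn))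

lemma EventuallyPos.eventually_exists_le (hpos : EventuallyPos p) (S : Finset G) :
    ∀ᶠ n in atTop, ∃ a > 0, ∀ g ∈ S, a ≤ convPow p n g := by
  filter_upwards [(eventually_all_finset S).2 fun g _ => hpos g] with n hn
  rcases S.eq_empty_or_nonempty with rfl | hS
  · exact ⟨1, one_pos, by simp⟩
  · obtain ⟨g, hg, hmin⟩ := S.exists_min_image (convPow p n) hS
    exact ⟨convPow p n g, hn g hg, hmin⟩

end Convolution

section LatticeCocycle

variable {G X ι : Type*} [Group G]

/-- A right action of `G` on `X` with a `ℤ^ι`-valued cocycle which, from every base point,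
identifies `G` with `X × ℤ^ι`. A finite-index copy of `ℤ^ι` in `G` gives one on its cosets. -/
structure LatticeCocycle (G X ι : Type*) [Group G] where
  act : X → G → X
  val : X → G → ι → ℤ
  act_one : ∀ x, act x 1 = x
  act_mul : ∀ x g h, act x (g * h) = act (act x g) h
  val_mul : ∀ x g h, val x (g * h) = val x g + val (act x g) h
  bij : ∀ x, Function.Bijective fun g => (act x g, val x g)

variable (A : LatticeCocycle G X ι)

lemma LatticeCocycle.val_one (x : X) : A.val x 1 = 0 := by
  simpa [A.act_one] using A.val_mul x 1 1

lemma LatticeCocycle.exists_act_eq_val_eq (x y : X) (k : ι → ℤ) :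
    ∃ g, A.act x g = y ∧ A.val x g = k := by
  simpa only [Prod.mk.injEq] using (A.bij x).surjective (y, k)

lemma LatticeCocycle.act_bijective (g : G) : Function.Bijective fun x => A.act x g :=
  Function.bijective_iff_has_inverse.2
    ⟨fun x => A.act x g⁻¹, fun x => by simp [← A.act_mul, A.act_one],
      fun x => by simp [← A.act_mul, A.act_one]⟩

lemma LatticeCocycle.sum_act [Fintype X] {M : Type*} [AddCommMonoid M] (g : G) (f : X → M) :
    ∑ x, f (A.act x g) = ∑ x, f x :=
  (A.act_bijective g).sum_comp f

/-- The 1-form `v̂(x, g) = ⟨v, val x g⟩`. -/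
def LatticeCocycle.form [Fintype ι] (v : ι → ℝ) (x : X) (g : G) : ℝ := ∑ i, v i * A.val x g i

lemma LatticeCocycle.form_smul [Fintype ι] (t : ℝ) (v : ι → ℝ) :
    A.form (t • v) = t • A.form v := by
  funext x g
  simp [form, Finset.mul_sum, mul_assoc]

lemma LatticeCocycle.form_mul [Fintype ι] (v : ι → ℝ) (x : X) (g h : G) :
    A.form v x (g * h) = A.form v x g + A.form v (A.act x g) h := by
  simp [form, A.val_mul, mul_add, Finset.sum_add_distrib]

end LatticeCocycle

section TwistedOperator

variable {G X : Type*} [Fintype X] {p : G → ℝ} {act : X → G → X}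

lemma norm_circleExp_mul_comp_le (ω : X → G → ℝ) (f : X → ℂ) (x : X) (g : G) :
    ‖(Circle.exp (ω x g) : ℂ) * f (act x g)‖ ≤ ‖f‖ := by
  rw [norm_mul, Circle.norm_coe, one_mul]
  exact norm_le_pi_norm f _

/-- The transition operator of the walk on `X` with steps drawn from `p`, twisted by the
1-form `ω`: its `n`-th power computes the characteristic function of `ω` along `n` steps. -/
noncomputable def twistedOp (act : X → G → X) (hp : IsProb p) (ω : X → G → ℝ) :
    (X → ℂ) →L[ℂ] (X → ℂ) :=
  LinearMap.mkContinuous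
    { toFun := fun f x => ∑' g, p g • ((Circle.exp (ω x g) : ℂ) * f (act x g))
      map_add' := fun f f' => funext fun x => by
        rw [Pi.add_apply, ← (hp.summable_smul (norm_circleExp_mul_comp_le ω f x)).tsum_add
          (hp.summable_smul (norm_circleExp_mul_comp_le ω f' x))]
        simp only [Pi.add_apply, mul_add, smul_add]
      map_smul' := fun c f => funext fun x => by
        simp only [Pi.smul_apply, RingHom.id_apply, ← tsum_const_smul'' c, smul_eq_mul,
          mul_left_comm _ c, mul_smul_comm] } 1 fun f => by
    rw [one_mul]
    exact (pi_norm_le_iff_of_nonneg (norm_nonneg f)).2 fun x =>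
      hp.norm_tsum_smul_le (norm_circleExp_mul_comp_le ω f x)

lemma twistedOp_apply (hp : IsProb p) (ω : X → G → ℝ) (f : X → ℂ) (x : X) :
    twistedOp act hp ω f x = ∑' g, p g • ((Circle.exp (ω x g) : ℂ) * f (act x g)) := rfl

lemma norm_twistedOp_le (hp : IsProb p) (ω : X → G → ℝ) : ‖twistedOp act hp ω‖ ≤ 1 :=
  LinearMap.mkContinuous_norm_le _ zero_le_one _

lemma twistedOp_zero_apply (hp : IsProb p) (f : X → ℂ) (x : X) :
    twistedOp act hp 0 f x = ∑' g, p g • f (act x g) := by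
  simp only [twistedOp_apply, Pi.zero_apply, Circle.exp_zero, Circle.coe_one, one_mul]

variable {ι : Type*} [Group G] (A : LatticeCocycle G X ι)

lemma LatticeCocycle.twistedOp_convPow (hp : IsProb p) {ω : X → G → ℝ}
    (hω : ∀ x g h, ω x (g * h) = ω x g + ω (A.act x g) h) (n : ℕ) :
    twistedOp A.act (isProb_convPow hp n) ω = twistedOp A.act hp ω ^ n := by
  induction n with
  | zero =>
    ext f x
    have hω1 : ω x 1 = 0 := by simpa [A.act_one] using hω x 1 1
    rw [twistedOp_apply, tsum_convPow_zero_smul]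
    simp [hω1, A.act_one]
  | succ n ih =>
    rw [pow_succ, ← ih]
    ext f x
    have hn := isProb_convPow hp n
    let F : G → ℂ := fun g => (Circle.exp (ω x g) : ℂ) * f (A.act x g)
    calc twistedOp A.act (isProb_convPow hp (n + 1)) ω f x
        = ∑' g, convPow p n g • ∑' s, p s • F (g * s) :=
          hn.tsum_conv_smul hp
            (hn.summable_mul_smul hp (f := F) (norm_circleExp_mul_comp_le ω f x))
      _ = twistedOp A.act hn ω (twistedOp A.act hp ω f) x :=
          tsum_congr fun g => by
            simp only [F, twistedOp_apply, hω, A.act_mul, Circle.exp_add, Circle.coe_mul, mul_assoc,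
              ← mul_smul_comm, tsum_mul_left]

end TwistedOperator

section Mixing

variable {G X ι : Type*} [Group G] [Fintype X] (A : LatticeCocycle G X ι) {p : G → ℝ}

lemma LatticeCocycle.sum_twistedOp_zero (hp : IsProb p) (f : X → ℂ) :
    ∑ x, twistedOp A.act hp 0 f x = ∑ x, f x := by
  have hsum : ∀ x ∈ Finset.univ, Summable fun g => p g • f (A.act x g) := fun x _ =>
    hp.summable_smul fun g => norm_le_pi_norm f _
  simp only [twistedOp_zero_apply, ← Summable.tsum_finsetSum hsum, ← Finset.smul_sum, A.sum_act,
    hp.tsum_smul_const]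

lemma LatticeCocycle.exists_norm_twistedOp_zero_pow_le (hp : IsProb p) (hpos : EventuallyPos p) :
    ∃ K > 0, ∃ r < 1, 0 ≤ r ∧ ∀ f : X → ℂ, ∑ x, f x = 0 →
      ‖(twistedOp A.act hp 0 ^ K) f‖ ≤ r * ‖f‖ := by
  choose g hg _ using fun z : X × X => A.exists_act_eq_val_eq z.1 z.2 0
  obtain ⟨K, ⟨a, ha, haK⟩, hK⟩ :=
    ((hpos.eventually_exists_le (Finset.univ.image g)).and (eventually_gt_atTop 0)).exists
  refine ⟨K, hK, max (1 - a) 0, by simp [ha], le_max_right _ _, fun f hf => ?_⟩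
  rw [← A.twistedOp_convPow hp (fun _ _ _ => (add_zero 0).symm)]
  refine (pi_norm_le_iff_of_nonneg (by positivity)).2 fun x => ?_
  have hinj : Function.Injective fun y => g (x, y) :=
    Function.LeftInverse.injective (g := A.act x) fun y => hg (x, y)
  have hbound := (isProb_convPow hp K).norm_tsum_smul_le_of_le
    (f := fun g => f (A.act x g)) (C := ‖f‖) (fun g => norm_le_pi_norm f _)
    (Finset.univ.image fun y => g (x, y)) ha.le (by simpa using fun y => haK (g (x, y)))
  rw [Finset.card_image_of_injective _ hinj, Finset.sum_image hinj.injOn] at hbound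
  simp only [fun y => hg (x, y), hf, norm_zero, mul_zero, add_zero] at hbound
  rw [twistedOp_zero_apply]
  have hcard : (1 : ℝ) ≤ (Finset.univ : Finset X).card := by
    exact_mod_cast Finset.card_pos.2 ⟨x, Finset.mem_univ x⟩
  refine hbound.trans (mul_le_mul_of_nonneg_right (le_max_of_le_left ?_) (norm_nonneg f))
  exact sub_le_sub_left (le_mul_of_one_le_right ha.le hcard) 1

lemma LatticeCocycle.tendsto_twistedOp_zero_pow (hp : IsProb p) (hpos : EventuallyPos p)
    {f : X → ℂ} (hf : ∑ x, f x = 0) :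
    Tendsto (fun n => (twistedOp A.act hp 0 ^ n) f) atTop (nhds 0) := by
  obtain ⟨K, hK, r, hr1, hr0, hr⟩ := A.exists_norm_twistedOp_zero_pow_le hp hpos
  have hanti : Antitone fun n => ‖(twistedOp A.act hp 0 ^ n) f‖ :=
    antitone_nat_of_succ_le fun n => by
      rw [pow_succ', mul_apply_eq_comp]
      exact (ContinuousLinearMap.le_of_opNorm_le _ (norm_twistedOp_le hp 0) _).trans_eq (one_mul _)
  have hgeom : ∀ j : ℕ, ‖(twistedOp A.act hp 0 ^ (K * j)) f‖ ≤ r ^ j * ‖f‖ := fun j => by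
    induction j with
    | zero => simp
    | succ j ih =>
      rw [Nat.mul_succ, add_comm, pow_add, mul_apply_eq_comp, pow_succ', mul_assoc]
      refine (hr _ ?_).trans (mul_le_mul_of_nonneg_left ih hr0)
      rw [← A.twistedOp_convPow hp (fun _ _ _ => (add_zero 0).symm), A.sum_twistedOp_zero, hf]
  rw [tendsto_zero_iff_norm_tendsto_zero,
    tendsto_iff_tendsto_subseq_of_antitone hanti (tendsto_id.const_mul_atTop' hK)]
  refine squeeze_zero (fun _ => norm_nonneg _) hgeom ?_
  simpa using (tendsto_pow_atTop_nhds_zero_of_lt_one hr0 hr1).mul_const ‖f‖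

lemma LatticeCocycle.exists_twistedOp_zero_sub_eq (hp : IsProb p) (hpos : EventuallyPos p)
    {f : X → ℂ} (hf : ∑ x, f x = 0) : ∃ h : X → ℂ, twistedOp A.act hp 0 h - h = f := by
  let Z : Submodule ℂ (X → ℂ) := LinearMap.ker (∑ x, LinearMap.proj x : (X → ℂ) →ₗ[ℂ] ℂ)
  have mem_Z : ∀ h, h ∈ Z ↔ ∑ x, h x = 0 := fun h => by simp [Z]
  let D : (X → ℂ) →ₗ[ℂ] (X → ℂ) := (twistedOp A.act hp 0 : (X → ℂ) →ₗ[ℂ] (X → ℂ)) - LinearMap.id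
  have hD : ∀ h, D h = twistedOp A.act hp 0 h - h := fun h => rfl
  have hDZ : ∀ h ∈ Z, D h ∈ Z := fun h _ => by
    simp only [mem_Z, hD, Pi.sub_apply, Finset.sum_sub_distrib, A.sum_twistedOp_zero, sub_self]
  have hinj : Function.Injective (D.restrict hDZ) := by
    refine (injective_iff_map_eq_zero _).2 fun h hh => Subtype.ext ?_
    have hfix : twistedOp A.act hp 0 h = h :=
      sub_eq_zero.1 (congrArg Subtype.val hh)
    have hpow : ∀ n, (twistedOp A.act hp 0 ^ n) (h : X → ℂ) = h := fun n => by
      rw [FunLike.coe_pow_eq_iterate, Function.iterate_fixed hfix]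
    have htendsto := A.tendsto_twistedOp_zero_pow hp hpos ((mem_Z h).1 h.2)
    simp only [hpow] at htendsto
    exact tendsto_nhds_unique tendsto_const_nhds htendsto
  obtain ⟨h, hh⟩ := LinearMap.injective_iff_surjective.1 hinj ⟨f, (mem_Z f).2 hf⟩
  exact ⟨h, congrArg Subtype.val hh⟩

lemma LatticeCocycle.exists_poisson (hp : IsProb p) (hpos : EventuallyPos p) {f : X → ℝ}
    (hf : ∑ x, f x = 0) : ∃ h : X → ℝ, ∀ x, ∑' g, p g * h (A.act x g) - h x = f x := by
  obtain ⟨h, hh⟩ := A.exists_twistedOp_zero_sub_eq hp hpos (f := fun x => (f x : ℂ))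
    (by exact_mod_cast hf)
  refine ⟨fun x => (h x).re, fun x => ?_⟩
  have hre := congrArg Complex.re (congrFun hh x)
  rw [Pi.sub_apply, twistedOp_zero_apply, Complex.sub_re, Complex.ofReal_re,
    Complex.re_tsum (hp.summable_smul fun g => norm_le_pi_norm h _)] at hre
  simpa only [Complex.smul_re, smul_eq_mul] using hre

end Mixing

section Contraction

variable {𝕜 E : Type*} [NontriviallyNormedField 𝕜] [NormedAddCommGroup E] [NormedSpace 𝕜 E]

lemma norm_pow_le_one_of_norm_le_one {T : E →L[𝕜] E} (hT : ‖T‖ ≤ 1) (n : ℕ) : ‖T ^ n‖ ≤ 1 := by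
  rcases n.eq_zero_or_pos with rfl | hn
  · exact ContinuousLinearMap.norm_id_le
  · exact (norm_pow_le' T hn).trans (pow_le_one₀ (norm_nonneg T) hT)

lemma tendsto_apply_of_norm_le_one {T : ℕ → E →L[𝕜] E} (hT : ∀ n, ‖T n‖ ≤ 1) {f : ℕ → E}
    {f₀ y : E} (hf : Tendsto f atTop (nhds f₀))
    (hy : Tendsto (fun n => T n f₀) atTop (nhds y)) :
    Tendsto (fun n => T n (f n)) atTop (nhds y) := by
  have hdiff : Tendsto (fun n => T n (f n - f₀)) atTop (nhds 0) :=
    squeeze_zero_norm (fun n => (T n).le_of_opNorm_le (hT n) _ |>.trans_eq (one_mul _))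
      (tendsto_iff_norm_sub_tendsto_zero.1 hf)
  simpa only [map_sub, sub_add_cancel, zero_add] using hdiff.add hy

lemma tendsto_pow_apply_of_norm_le_one {T : ℕ → E →L[𝕜] E} {S : E →L[𝕜] E}
    (hT : ∀ n, ‖T n‖ ≤ 1) (hTS : ∀ f, Tendsto (fun n => T n f) atTop (nhds (S f))) (k : ℕ)
    (f : E) : Tendsto (fun n => (T n ^ k) f) atTop (nhds ((S ^ k) f)) := by
  induction k with
  | zero => exact tendsto_const_nhds
  | succ k ih =>
    simp only [pow_succ', mul_apply_eq_comp]
    exact tendsto_apply_of_norm_le_one hT ih (hTS _)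

lemma tendsto_pow_self_apply_zero {T : ℕ → E →L[𝕜] E} {S : E →L[𝕜] E} (hT : ∀ n, ‖T n‖ ≤ 1)
    (hTS : ∀ f, Tendsto (fun n => T n f) atTop (nhds (S f))) {f : E}
    (hf : Tendsto (fun k => (S ^ k) f) atTop (nhds 0)) :
    Tendsto (fun n => (T n ^ n) f) atTop (nhds 0) := by
  rw [Metric.tendsto_nhds]
  intro ε hε
  obtain ⟨k, hk⟩ := (hf.norm.eventually_lt_const (norm_zero.trans_lt hε)).exists
  filter_upwards [(tendsto_pow_apply_of_norm_le_one hT hTS k f).norm.eventually_lt_const hk,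
    eventually_ge_atTop k] with n hn hkn
  calc dist ((T n ^ n) f) 0 = ‖(T n ^ (n - k)) ((T n ^ k) f)‖ := by
        rw [dist_zero_right, ← mul_apply_eq_comp, ← pow_add,
          Nat.sub_add_cancel hkn]
    _ ≤ 1 * ‖(T n ^ k) f‖ :=
        (T n ^ (n - k)).le_of_opNorm_le (norm_pow_le_one_of_norm_le_one (hT n) _) _
    _ < ε := by rwa [one_mul]

lemma norm_pow_apply_sub_pow_smul_le {T : E →L[𝕜] E} (hT : ‖T‖ ≤ 1) {a : 𝕜} (ha : ‖a‖ ≤ 1)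
    (f : E) (n : ℕ) : ‖(T ^ n) f - a ^ n • f‖ ≤ n * ‖T f - a • f‖ := by
  induction n with
  | zero => simp
  | succ n ih =>
    have hsplit : (T ^ (n + 1)) f - a ^ (n + 1) • f =
        (T ^ n) (T f - a • f) + a • ((T ^ n) f - a ^ n • f) := by
      rw [pow_succ, mul_apply_eq_comp, map_sub, map_smul, smul_sub, smul_smul,
        pow_succ']
      abel
    calc ‖(T ^ (n + 1)) f - a ^ (n + 1) • f‖
        ≤ 1 * ‖T f - a • f‖ + ‖a‖ * ‖(T ^ n) f - a ^ n • f‖ := by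
          rw [hsplit, ← norm_smul]
          exact norm_add_le_of_le
            ((T ^ n).le_of_opNorm_le (norm_pow_le_one_of_norm_le_one hT n) _) le_rfl
      _ ≤ 1 * ‖T f - a • f‖ + 1 * (n * ‖T f - a • f‖) := by gcongr
      _ = (n + 1 : ℕ) * ‖T f - a • f‖ := by
          push_cast
          ring

lemma tendsto_pow_self_apply_of_approx_eigenvector {𝕜 E : Type*} [RCLike 𝕜]
    [NormedAddCommGroup E] [NormedSpace 𝕜 E] {T : ℕ → E →L[𝕜] E} (hT : ∀ n, ‖T n‖ ≤ 1) {q : ℝ}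
    (hq : q ≤ 0) {φ : ℕ → E} {φ₀ : E} (hφ : Tendsto φ atTop (nhds φ₀))
    (h : Tendsto (fun n : ℕ => (n : 𝕜) • (T n (φ n) - ((1 + q / n : ℝ) : 𝕜) • φ n)) atTop
      (nhds 0)) :
    Tendsto (fun n => (T n ^ n) φ₀) atTop (nhds ((Real.exp q : 𝕜) • φ₀)) := by
  let a : ℕ → 𝕜 := fun n => ((1 + q / n : ℝ) : 𝕜)
  have ha_norm : ∀ᶠ n in atTop, ‖a n‖ ≤ 1 := by
    filter_upwards [tendsto_natCast_atTop_atTop.eventually_ge_atTop (-q),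
      eventually_gt_atTop 0] with n hqn hn
    have hn' : (0 : ℝ) < n := Nat.cast_pos.2 hn
    rw [RCLike.norm_ofReal, abs_le]
    constructor
    · linarith [(le_div_iff₀ hn').2 (show -1 * (n : ℝ) ≤ q by linarith)]
    · linarith [div_nonpos_of_nonpos_of_nonneg hq hn'.le]
  have ha_pow : Tendsto (fun n => a n ^ n) atTop (nhds (Real.exp q : 𝕜)) :=
    ((RCLike.continuous_ofReal.tendsto _).comp (Real.tendsto_one_add_div_pow_exp q)).congr
      fun n => RCLike.ofReal_pow _ _
  have hdiff : Tendsto (fun n => (T n ^ n) (φ n) - a n ^ n • φ n) atTop (nhds 0) := by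
    refine squeeze_zero_norm' ?_ (tendsto_zero_iff_norm_tendsto_zero.1 h)
    filter_upwards [ha_norm] with n hn
    exact (norm_pow_apply_sub_pow_smul_le (hT n) hn (φ n) n).trans_eq
      (by rw [norm_smul, RCLike.norm_natCast])
  have hφn : Tendsto (fun n => (T n ^ n) (φ n)) atTop (nhds ((Real.exp q : 𝕜) • φ₀)) := by
    simpa only [sub_add_cancel, zero_add] using hdiff.add (ha_pow.smul hφ)
  have hcorr : Tendsto (fun n => (T n ^ n) (φ₀ - φ n)) atTop (nhds 0) :=
    tendsto_apply_of_norm_le_one (fun n => norm_pow_le_one_of_norm_le_one (hT n) n)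
      (by simpa only [sub_self] using hφ.const_sub φ₀) (by simp only [map_zero, tendsto_const_nhds])
  simpa only [map_sub, sub_add_cancel, zero_add] using hcorr.add hφn

end Contraction

section GaussianDomination

lemma norm_pow_le_exp_of_norm_pow_le_exp {R : Type*} [SeminormedRing R] {T : R}
    (hT : ∀ n, ‖T ^ n‖ ≤ 1) {K n : ℕ} (hK : 0 < K) (hn : K ≤ n) {s : ℝ} (hs : 0 ≤ s)
    (h : ‖T ^ K‖ ≤ Real.exp (-s)) : ‖T ^ n‖ ≤ Real.exp (-(n / (2 * K) * s)) := by
  have hdiv : 0 < n / K := Nat.div_pos hn hK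
  have hn_le : n ≤ n / K * (2 * K) := by
    have := Nat.div_add_mod n K
    have := Nat.mod_lt n hK
    have := Nat.le_mul_of_pos_right K hdiv
    linarith
  calc ‖T ^ n‖ = ‖(T ^ K) ^ (n / K) * T ^ (n % K)‖ := by rw [← pow_mul, ← pow_add, Nat.div_add_mod]
    _ ≤ ‖T ^ K‖ ^ (n / K) * 1 := (norm_mul_le _ _).trans <|
        mul_le_mul (norm_pow_le' _ hdiv) (hT _) (norm_nonneg _) (by positivity)
    _ ≤ Real.exp (-s) ^ (n / K) * 1 := by gcongr
    _ = Real.exp (-((n / K : ℕ) * s)) := by rw [mul_one, ← Real.exp_nat_mul, mul_neg]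
    _ ≤ Real.exp (-(n / (2 * K) * s)) := by
        gcongr
        rw [div_le_iff₀ (by positivity)]
        exact_mod_cast hn_le

lemma norm_one_add_circleExp_le {θ : ℝ} (hθ : |θ| ≤ Real.pi) :
    ‖1 + (Circle.exp θ : ℂ)‖ ≤ 2 - θ ^ 2 / Real.pi ^ 2 := by
  obtain ⟨hl, hr⟩ := abs_le.1 hθ
  have hcos : 0 ≤ Real.cos (θ / 2) :=
    Real.cos_nonneg_of_mem_Icc ⟨by linarith, by linarith⟩
  have hhalf : 1 + (Circle.exp θ : ℂ) = (2 * Real.cos (θ / 2) : ℝ) * Circle.exp (θ / 2) := by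
    push_cast
    rw [Complex.two_cos, add_mul, ← Complex.exp_add, ← Complex.exp_add]
    ring_nf
    rw [Complex.exp_zero, add_comm]
  rw [hhalf, norm_mul, Circle.norm_coe, mul_one, Complex.norm_of_nonneg (by positivity)]
  have hbound := Real.cos_le_one_sub_mul_cos_sq (x := θ / 2)
    (abs_le.2 ⟨by linarith [Real.pi_pos], by linarith [Real.pi_pos]⟩)
  calc 2 * Real.cos (θ / 2) ≤ 2 * (1 - 2 / Real.pi ^ 2 * (θ / 2) ^ 2) := by gcongr
    _ = 2 - θ ^ 2 / Real.pi ^ 2 := by ring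

lemma norm_twistedOp_pow_le {G X : Type*} [Fintype X] {act : X → G → X} {p : G → ℝ}
    (hp : IsProb p) (ω : X → G → ℝ) (n : ℕ) : ‖twistedOp act hp ω ^ n‖ ≤ 1 :=
  norm_pow_le_one_of_norm_le_one (norm_twistedOp_le hp ω) n

variable {G X ι : Type*} [Group G] [Fintype X] [Fintype ι] (A : LatticeCocycle G X ι) {p : G → ℝ}

lemma LatticeCocycle.twistedOp_form_convPow (hp : IsProb p) (v : ι → ℝ) (n : ℕ) :
    twistedOp A.act (isProb_convPow hp n) (A.form v) = twistedOp A.act hp (A.form v) ^ n :=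
  A.twistedOp_convPow hp (A.form_mul v) n

-- A step by `g` and a step by `1` differ by a phase `exp (i vᵢ)`, which costs mass `a (vᵢ / π)²`.
lemma LatticeCocycle.norm_twistedOp_form_le (hp : IsProb p) {a : ℝ} (ha : 0 ≤ a) (h1 : a ≤ p 1)
    {i : ι} (hg : ∀ x, ∃ g, A.act x g = x ∧ A.val x g = Pi.single i 1 ∧ a ≤ p g)
    {v : ι → ℝ} (hv : |v i| ≤ Real.pi) :
    ‖twistedOp A.act hp (A.form v)‖ ≤ Real.exp (-(a / Real.pi ^ 2 * v i ^ 2)) := by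
  refine ContinuousLinearMap.opNorm_le_bound _ (Real.exp_pos _).le fun f =>
    (pi_norm_le_iff_of_nonneg (by positivity)).2 fun x => ?_
  obtain ⟨g, hact, hval, hag⟩ := hg x
  have hne : (1 : G) ≠ g := by
    rintro rfl
    simpa [A.val_one] using congrFun hval i
  have hform : A.form v x g = v i := by
    simp [form, hval, Pi.single_apply]
  have hform1 : A.form v x 1 = 0 := by
    simp [form, A.val_one]
  have hbound := hp.norm_tsum_smul_le_of_le
    (norm_circleExp_mul_comp_le (act := A.act) (A.form v) f x) {1, g} ha (by simp [h1, hag])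
  rw [Finset.card_pair hne, Finset.sum_pair hne, hform, hform1, A.act_one, hact, Circle.exp_zero,
    Circle.coe_one, ← add_mul, norm_mul] at hbound
  have hphase := norm_one_add_circleExp_le hv
  have hphase0 := (norm_nonneg _).trans hphase
  calc ‖twistedOp A.act hp (A.form v) f x‖
      ≤ (1 - a * (2 : ℕ)) * ‖f‖ + a * ((2 - v i ^ 2 / Real.pi ^ 2) * ‖f‖) :=
        hbound.trans (by gcongr; exact norm_le_pi_norm f x)
    _ = (-(a / Real.pi ^ 2 * v i ^ 2) + 1) * ‖f‖ := by push_cast; ring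
    _ ≤ Real.exp (-(a / Real.pi ^ 2 * v i ^ 2)) * ‖f‖ := by
        gcongr
        exact Real.add_one_le_exp _

lemma LatticeCocycle.exists_norm_twistedOp_form_pow_le_coord (hp : IsProb p)
    (hpos : EventuallyPos p) :
    ∃ K > 0, ∃ c > 0, ∀ (v : ι → ℝ) (i : ι), |v i| ≤ Real.pi →
      ‖twistedOp A.act hp (A.form v) ^ K‖ ≤ Real.exp (-(c * v i ^ 2)) := by
  choose g hact hval using fun z : X × ι => A.exists_act_eq_val_eq z.1 z.1 (Pi.single z.2 1)
  obtain ⟨K, ⟨a, ha, haK⟩, hK⟩ := ((hpos.eventually_exists_le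
    (insert 1 (Finset.univ.image g))).and (eventually_gt_atTop 0)).exists
  refine ⟨K, hK, a / Real.pi ^ 2, by positivity, fun v i hv => ?_⟩
  rw [← A.twistedOp_form_convPow]
  exact A.norm_twistedOp_form_le (isProb_convPow hp K) ha.le (haK 1 (by simp))
    (fun x => ⟨g (x, i), hact (x, i), hval (x, i), haK _ (by simp)⟩) hv

lemma exists_sum_sq_le_card_mul_sq [Nonempty ι] (v : ι → ℝ) :
    ∃ i, ∑ j, v j ^ 2 ≤ Fintype.card ι * v i ^ 2 := by
  obtain ⟨i, hi⟩ := Finite.exists_max fun i => v i ^ 2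
  exact ⟨i, by
    simpa using Finset.sum_le_card_nsmul Finset.univ (fun j => v j ^ 2) _ fun j _ => hi j⟩

lemma LatticeCocycle.exists_norm_twistedOp_form_pow_le (hp : IsProb p) (hpos : EventuallyPos p) :
    ∃ c > 0, ∀ᶠ n : ℕ in atTop, ∀ v : ι → ℝ, (∀ i, |v i| ≤ Real.pi) →
      ‖twistedOp A.act hp (A.form v) ^ n‖ ≤ Real.exp (-(c * (n * ∑ i, v i ^ 2))) := by
  rcases isEmpty_or_nonempty ι with hι | hι
  · exact ⟨1, one_pos, .of_forall fun n v _ => by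
      simpa using norm_twistedOp_pow_le (act := A.act) hp (A.form v) n⟩
  obtain ⟨K, hK, c, hc, hcoord⟩ := A.exists_norm_twistedOp_form_pow_le_coord hp hpos
  refine ⟨c / (2 * K * Fintype.card ι), by positivity, ?_⟩
  filter_upwards [eventually_ge_atTop K] with n hn v hv
  obtain ⟨i, hi⟩ := exists_sum_sq_le_card_mul_sq v
  refine (norm_pow_le_exp_of_norm_pow_le_exp (norm_twistedOp_pow_le hp _) hK hn (by positivity)
    (hcoord v i (hv i))).trans (Real.exp_le_exp.2 (neg_le_neg ?_))
  calc c / (2 * K * Fintype.card ι) * (n * ∑ i, v i ^ 2)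
      ≤ c / (2 * K * Fintype.card ι) * (n * (Fintype.card ι * v i ^ 2)) := by gcongr
    _ = n / (2 * K) * (c * v i ^ 2) := by field_simp

end GaussianDomination

section SquareSummable

variable {G : Type*} {p f k : G → ℝ}

/-- Square integrability of `f` under the weights `p`. -/
def SqSummable (p f : G → ℝ) : Prop := Summable fun g => p g * f g ^ 2

lemma SqSummable.summable_mul (hf : SqSummable p f) (hk : SqSummable p k) (hp : IsProb p) :
    Summable fun g => p g * (f g * k g) := by
  refine .of_norm_bounded (Summable.add hf hk) fun g => ?_
  rw [norm_mul, Real.norm_of_nonneg (hp.1 g), ← mul_add, Real.norm_eq_abs]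
  refine mul_le_mul_of_nonneg_left (abs_le.2 ⟨?_, ?_⟩) (hp.1 g)
  · nlinarith [sq_nonneg (f g + k g), sq_nonneg (f g - k g)]
  · nlinarith [sq_nonneg (f g + k g), sq_nonneg (f g - k g)]

lemma IsProb.sqSummable_of_abs_le (hp : IsProb p) {C : ℝ} (hf : ∀ g, |f g| ≤ C) :
    SqSummable p f :=
  hp.summable_smul (f := fun g => f g ^ 2) (C := C ^ 2) fun g => by
    rw [norm_pow, Real.norm_eq_abs]
    exact pow_le_pow_left₀ (abs_nonneg _) (hf g) 2

lemma IsProb.sqSummable_comp {X : Type*} [Finite X] (hp : IsProb p) (h : X → ℝ) (φ : G → X) :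
    SqSummable p fun g => h (φ g) := by
  obtain ⟨C, hC⟩ := (Set.finite_range fun x => |h x|).bddAbove
  exact hp.sqSummable_of_abs_le fun g => hC ⟨φ g, rfl⟩

lemma SqSummable.summable (hf : SqSummable p f) (hp : IsProb p) :
    Summable fun g => p g * f g := by
  simpa only [mul_one] using
    hf.summable_mul (hp.sqSummable_of_abs_le (f := fun _ => 1) fun _ => abs_one.le) hp

lemma SqSummable.add (hf : SqSummable p f) (hk : SqSummable p k) (hp : IsProb p) :
    SqSummable p fun g => f g + k g :=
  ((Summable.add hf hk).add ((hf.summable_mul hk hp).mul_left 2)).congr fun g => by ring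

lemma SqSummable.const_mul (hf : SqSummable p f) (c : ℝ) : SqSummable p fun g => c * f g :=
  (Summable.mul_left (c ^ 2) hf).congr fun g => by ring

lemma SqSummable.sum {ι : Type*} (hp : IsProb p) (s : Finset ι) {f : ι → G → ℝ}
    (hf : ∀ i ∈ s, SqSummable p (f i)) : SqSummable p fun g => ∑ i ∈ s, f i g := by
  induction s using Finset.induction_on with
  | empty => simpa only [Finset.sum_empty] using hp.sqSummable_of_abs_le fun _ => abs_zero.le
  | insert i s hi ih =>
    simp only [Finset.sum_insert hi]
    exact (hf i (Finset.mem_insert_self i s)).add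
      (ih fun j hj => hf j (Finset.mem_insert_of_mem hj)) hp

end SquareSummable

section Centred

variable {G X ι : Type*} {act : X → G → X} {ω : X → G → ℝ} {p : G → ℝ}

/-- The 1-form `ω` recentred at `a` and modified by the coboundary of `h`. -/
def corrected (act : X → G → X) (ω : X → G → ℝ) (a : ℝ) (h : X → ℝ) (x : X) (g : G) : ℝ :=
  ω x g - a + (h (act x g) - h x)

lemma smul_corrected (t a : ℝ) (h : X → ℝ) :
    t • corrected act ω a h = corrected act (t • ω) (t * a) (t • h) := by
  funext x g
  simp only [corrected, Pi.smul_apply, smul_eq_mul]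
  ring

lemma SqSummable.corrected [Finite X] {x : X} (hω : SqSummable p (ω x)) (hp : IsProb p) (a : ℝ)
    (h : X → ℝ) : SqSummable p (corrected act ω a h x) :=
  (hω.add (hp.sqSummable_comp (fun y => h y - h x - a) (act x)) hp).congr fun g => by
    rw [NSVA.corrected]
    ring

/-- The increments `ω` are square integrable martingale increments of average variance `Q`. -/
structure IsCentred [Fintype X] (ω : X → G → ℝ) (p : G → ℝ) (Q : ℝ) : Prop where
  sqSummable : ∀ x, SqSummable p (ω x)
  tsum_eq_zero : ∀ x, ∑' g, p g * ω x g = 0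
  sum_tsum_sq : ∑ x, ∑' g, p g * ω x g ^ 2 = Fintype.card X * Q

variable [Fintype X]

lemma IsCentred.tsum_sq_le {Q : ℝ} (hω : IsCentred ω p Q) (hp : IsProb p) (x : X) :
    ∑' g, p g * ω x g ^ 2 ≤ Fintype.card X * Q :=
  hω.sum_tsum_sq ▸ Finset.single_le_sum (f := fun x => ∑' g, p g * ω x g ^ 2)
    (fun _ _ => tsum_nonneg fun g => mul_nonneg (hp.1 g) (sq_nonneg _)) (Finset.mem_univ x)

lemma IsCentred.nonneg [Nonempty X] {Q : ℝ} (hω : IsCentred ω p Q) (hp : IsProb p) : 0 ≤ Q :=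
  nonneg_of_mul_nonneg_right ((tsum_nonneg fun g => mul_nonneg (hp.1 g) (sq_nonneg _)).trans
    (hω.tsum_sq_le hp (Classical.arbitrary X))) (by positivity)

lemma LatticeCocycle.exists_isCentred_corrected [Group G] [Nonempty X] (A : LatticeCocycle G X ι)
    (hp : IsProb p) (hpos : EventuallyPos p) (hω : ∀ x, SqSummable p (ω x)) :
    ∃ a h Q, IsCentred (corrected A.act ω a h) p Q := by
  let m : X → ℝ := fun x => ∑' g, p g * ω x g
  let a : ℝ := (Fintype.card X : ℝ)⁻¹ * ∑ x, m x
  obtain ⟨h, hh⟩ := A.exists_poisson hp hpos (f := fun x => a - m x) (by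
    rw [Finset.sum_sub_distrib, Finset.sum_const, Finset.card_univ, nsmul_eq_mul,
      mul_inv_cancel_left₀ (by positivity), sub_self])
  refine ⟨a, h, (Fintype.card X : ℝ)⁻¹ * ∑ x, ∑' g, p g * corrected A.act ω a h x g ^ 2,
    fun x => (hω x).corrected hp a h, fun x => ?_, by field_simp⟩
  have hmean : HasSum (fun g => p g * corrected A.act ω a h x g)
      (m x + ∑' g, p g * h (A.act x g) - 1 * (a + h x)) := by
    have hωx := ((hω x).summable hp).hasSum
    have hhx := ((hp.sqSummable_comp h (A.act x)).summable hp).hasSum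
    refine ((hωx.add hhx).sub (hp.2.mul_right (a + h x))).congr_fun fun g => ?_
    rw [corrected]
    ring
  rw [hmean.tsum_eq]
  linear_combination hh x

end Centred

section Taylor

lemma norm_circleExp_sub_one_sub_le (u : ℝ) :
    ‖(Circle.exp u : ℂ) - 1 - u * Complex.I‖ ≤ 3 * u ^ 2 := by
  have hu : ‖(u : ℂ) * Complex.I‖ = |u| := by simp
  rcases le_or_gt |u| 1 with hle | hgt
  · have hquad := Complex.norm_exp_sub_one_sub_id_le (hu.trans_le hle)
    rw [hu, sq_abs] at hquad
    exact hquad.trans (by linarith [sq_nonneg u])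
  · calc ‖(Circle.exp u : ℂ) - 1 - u * Complex.I‖ ≤ 1 + 1 + |u| :=
          norm_sub_le_of_le (norm_sub_le_of_le (Circle.norm_coe _).le norm_one.le) hu.le
      _ ≤ 3 * u ^ 2 := by nlinarith [sq_abs u]

lemma tendsto_circleExp_sub_one_sub_div_sq (u : ℝ) :
    Tendsto (fun t : ℝ => ((Circle.exp (t * u) : ℂ) - 1 - (t * u : ℝ) * Complex.I) / (t : ℂ) ^ 2)
      (nhdsWithin 0 {0}ᶜ) (nhds (-((u ^ 2 / 2 : ℝ) : ℂ))) := by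
  have hlin : Tendsto (fun t : ℝ => ((t * u : ℝ) : ℂ) * Complex.I) (nhdsWithin 0 {0}ᶜ)
      (nhds 0) := by
    have hcont : Continuous fun t : ℝ => ((t * u : ℝ) : ℂ) * Complex.I := by fun_prop
    exact (hcont.tendsto' 0 0 (by simp)).mono_left nhdsWithin_le_nhds
  have hrem : (fun t : ℝ => (Circle.exp (t * u) : ℂ) - (1 + (t * u : ℝ) * Complex.I
      + ((t * u : ℝ) * Complex.I) ^ 2 / 2)) =o[nhdsWithin 0 {0}ᶜ] fun t => (t : ℂ) ^ 2 := by
    have h := (Complex.exp_sub_sum_range_succ_isLittleO_pow 2).comp_tendsto hlin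
    refine (h.trans_isBigO (.of_bound (u ^ 2) (.of_forall fun t => ?_))).congr_left fun t => ?_
    · simp [mul_pow, mul_comm]
    · simp [Finset.sum_range_succ]
  have hlim := hrem.tendsto_div_nhds_zero.add_const (-((u ^ 2 / 2 : ℝ) : ℂ))
  rw [zero_add] at hlim
  refine hlim.congr' ?_
  filter_upwards [self_mem_nhdsWithin] with t ht
  have ht' : (t : ℂ) ≠ 0 := Complex.ofReal_ne_zero.2 ht
  field_simp
  push_cast
  rw [mul_pow, Complex.I_sq]
  ring

variable {G : Type*} {p : G → ℝ}

lemma IsProb.tendsto_tsum_smul {α : Type*} {l : Filter α} [l.IsCountablyGenerated]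
    (hp : IsProb p) {F : α → G → ℂ} {f : G → ℂ} {B : G → ℝ} (hB : Summable fun g => p g * B g)
    (hFB : ∀ᶠ a in l, ∀ g, ‖F a g‖ ≤ B g) (hF : ∀ g, Tendsto (F · g) l (nhds (f g))) :
    Tendsto (fun a => ∑' g, p g • F a g) l (nhds (∑' g, p g • f g)) := by
  refine tendsto_tsum_of_dominated_convergence hB (fun g => (hF g).const_smul _)
    (hFB.mono fun a ha g => ?_)
  rw [norm_smul, Real.norm_of_nonneg (hp.1 g)]
  exact mul_le_mul_of_nonneg_left (ha g) (hp.1 g)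

lemma SqSummable.tendsto_charFun_sub_one_div_sq (hp : IsProb p) {ω : G → ℝ}
    (hω : SqSummable p ω) (hmean : ∑' g, p g * ω g = 0) :
    Tendsto (fun t : ℝ => ((∑' g, p g • (Circle.exp (t * ω g) : ℂ)) - 1) / (t : ℂ) ^ 2)
      (nhdsWithin 0 {0}ᶜ) (nhds (-(((∑' g, p g * ω g ^ 2) / 2 : ℝ) : ℂ))) := by
  have hlim := hp.tendsto_tsum_smul
    (F := fun t g => ((Circle.exp (t * ω g) : ℂ) - 1 - (t * ω g : ℝ) * Complex.I) / (t : ℂ) ^ 2)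
    (f := fun g => -((ω g ^ 2 / 2 : ℝ) : ℂ)) (B := fun g => 3 * ω g ^ 2)
    ((Summable.mul_left 3 hω).congr fun g => by ring) ?_
    fun g => tendsto_circleExp_sub_one_sub_div_sq (ω g)
  · have hvar : ∑' g, p g • (-((ω g ^ 2 / 2 : ℝ) : ℂ)) = -((∑' g, p g * ω g ^ 2) / 2 : ℝ) := by
      rw [← tsum_div_const, Complex.ofReal_tsum, ← tsum_neg]
      refine tsum_congr fun g => ?_
      rw [Complex.real_smul]
      push_cast
      ring
    rw [hvar] at hlim
    refine hlim.congr fun t => ?_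
    have hexp : HasSum (fun g => p g • (Circle.exp (t * ω g) : ℂ)) _ :=
      (hp.summable_smul fun g => (Circle.norm_coe _).le).hasSum
    have hone : HasSum (fun g => (p g : ℂ)) ((1 : ℝ) : ℂ) := Complex.hasSum_ofReal.2 hp.2
    have hlin : HasSum (fun g => ((p g * ω g : ℝ) : ℂ)) ((0 : ℝ) : ℂ) :=
      Complex.hasSum_ofReal.2 (hmean ▸ (hω.summable hp).hasSum)
    have hsum := ((hexp.sub hone).sub (hlin.mul_left (t * Complex.I))).div_const ((t : ℂ) ^ 2)
    rw [Complex.ofReal_zero, mul_zero, sub_zero, Complex.ofReal_one] at hsum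
    rw [← hsum.tsum_eq]
    refine tsum_congr fun g => ?_
    simp only [Complex.real_smul, Complex.ofReal_mul]
    ring
  · filter_upwards [self_mem_nhdsWithin] with t ht g
    rw [norm_div, norm_pow, Complex.norm_real, Real.norm_eq_abs, sq_abs,
      div_le_iff₀ (sq_pos_of_ne_zero ht)]
    exact (norm_circleExp_sub_one_sub_le _).trans_eq (by ring)

end Taylor

section CentralLimit

lemma tendsto_inv_sqrt_natCast :
    Tendsto (fun n : ℕ => (√n)⁻¹) atTop (nhdsWithin 0 {0}ᶜ) :=
  (tendsto_inv_atTop_nhdsGT_zero.comp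
    (Real.tendsto_sqrt_atTop.comp tendsto_natCast_atTop_atTop)).mono_right
      (nhdsWithin_mono 0 fun _ ht => ht.ne')

variable {G X ι : Type*} [Fintype X] {act : X → G → X} {p : G → ℝ}

lemma tendsto_twistedOp {α : Type*} {l : Filter α} [l.IsCountablyGenerated] (hp : IsProb p)
    {Ω : α → X → G → ℝ} {ω : X → G → ℝ} (hΩ : ∀ x g, Tendsto (Ω · x g) l (nhds (ω x g)))
    (f : X → ℂ) :
    Tendsto (fun a => twistedOp act hp (Ω a) f) l (nhds (twistedOp act hp ω f)) :=
  tendsto_pi_nhds.2 fun x => hp.tendsto_tsum_smul (hp.2.summable.mul_right ‖f‖)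
    (.of_forall fun a => norm_circleExp_mul_comp_le (Ω a) f x) fun g =>
      ((continuous_subtype_val.comp Circle.exp.continuous).tendsto _ |>.comp (hΩ x g)).mul_const _

lemma tendsto_twistedOp_inv_sqrt_smul (hp : IsProb p) (ω : X → G → ℝ) (f : X → ℂ) :
    Tendsto (fun n : ℕ => twistedOp act hp ((√n)⁻¹ • ω) f) atTop (nhds (twistedOp act hp 0 f)) :=
  tendsto_twistedOp hp (fun x g => by
    simpa using (tendsto_inv_sqrt_natCast.mono_right nhdsWithin_le_nhds).mul_const (ω x g)) f

variable {ω : X → G → ℝ} {Q : ℝ}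

lemma IsCentred.tendsto_mul_twistedOp_one_sub_one (hω : IsCentred ω p Q) (hp : IsProb p) (x : X) :
    Tendsto (fun n : ℕ => (n : ℂ) * (twistedOp act hp ((√n)⁻¹ • ω) 1 x - 1)) atTop
      (nhds (-(((∑' g, p g * ω x g ^ 2) / 2 : ℝ) : ℂ))) := by
  refine (((hω.sqSummable x).tendsto_charFun_sub_one_div_sq hp (hω.tsum_eq_zero x)).comp
    tendsto_inv_sqrt_natCast).congr fun n => ?_
  have hsq : (((√n)⁻¹ : ℝ) : ℂ) ^ 2 = (n : ℂ)⁻¹ := by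
    rw [← Complex.ofReal_pow, inv_pow, Real.sq_sqrt n.cast_nonneg, Complex.ofReal_inv,
      Complex.ofReal_natCast]
  simp only [Function.comp_apply, hsq, twistedOp_apply, Pi.one_apply, mul_one, Pi.smul_apply,
    smul_eq_mul, div_inv_eq_mul, mul_comm (n : ℂ)]

variable [Group G] (A : LatticeCocycle G X ι)

-- The Poisson equation makes `1 + k / n` an approximate eigenvector with eigenvalue `1 - Q / 2n`.
lemma IsCentred.tendsto_twistedOp_pow_one (hω : IsCentred ω p Q) [Nonempty X] (hp : IsProb p)
    (hpos : EventuallyPos p) :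
    Tendsto (fun n : ℕ => (twistedOp A.act hp ((√n)⁻¹ • ω) ^ n) 1) atTop
      (nhds ((Real.exp (-(Q / 2)) : ℂ) • 1)) := by
  obtain ⟨k, hk⟩ := A.exists_twistedOp_zero_sub_eq hp hpos
    (f := fun x => (((∑' g, p g * ω x g ^ 2) / 2 - Q / 2 : ℝ) : ℂ)) (by
      rw [← Complex.ofReal_sum, Finset.sum_sub_distrib, ← Finset.sum_div, hω.sum_tsum_sq]
      simp [mul_div_assoc])
  have hinv : Tendsto (fun n : ℕ => (n : ℂ)⁻¹) atTop (nhds 0) := tendsto_inv_atTop_nhds_zero_nat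
  have hT : ∀ n : ℕ, ‖twistedOp A.act hp ((√n)⁻¹ • ω)‖ ≤ 1 := fun n => norm_twistedOp_le hp _
  refine tendsto_pow_self_apply_of_approx_eigenvector hT
    (φ := fun n => 1 + (n : ℂ)⁻¹ • k) (by linarith [hω.nonneg hp])
    (by simpa using (hinv.smul_const k).const_add 1) (tendsto_pi_nhds.2 fun x => ?_)
  have hone := hω.tendsto_mul_twistedOp_one_sub_one (act := A.act) hp x
  have hTk := tendsto_pi_nhds.1 (tendsto_twistedOp_inv_sqrt_smul (act := A.act) hp ω k) x
  have hlim := ((hone.add hTk).add_const (((Q / 2 : ℝ) : ℂ) - k x)).add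
    (hinv.mul_const (((Q / 2 : ℝ) : ℂ) * k x))
  have hzero : -(((∑' g, p g * ω x g ^ 2) / 2 : ℝ) : ℂ) + twistedOp A.act hp 0 k x
      + (((Q / 2 : ℝ) : ℂ) - k x) + 0 * (((Q / 2 : ℝ) : ℂ) * k x) = 0 := by
    have hkx := congrFun hk x
    rw [Pi.sub_apply, Complex.ofReal_sub] at hkx
    linear_combination hkx
  rw [hzero] at hlim
  refine hlim.congr' ?_
  filter_upwards [eventually_gt_atTop 0] with n hn
  have hn' : (n : ℂ) ≠ 0 := Nat.cast_ne_zero.2 hn.ne'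
  simp only [map_add, map_smul, Pi.smul_apply, Pi.sub_apply, Pi.add_apply, Pi.one_apply,
    smul_eq_mul, RCLike.ofReal_eq_complex_ofReal]
  push_cast
  field_simp
  ring

/-- Central limit theorem for the additive functional `ω`, jointly with the position in `X`. -/
lemma IsCentred.tendsto_twistedOp_pow (hω : IsCentred ω p Q) [Nonempty X] (hp : IsProb p)
    (hpos : EventuallyPos p) (f : X → ℂ) (x : X) :
    Tendsto (fun n : ℕ => (twistedOp A.act hp ((√n)⁻¹ • ω) ^ n) f x) atTop
      (nhds (Real.exp (-(Q / 2)) * ((Fintype.card X : ℂ)⁻¹ * ∑ y, f y))) := by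
  set avg : ℂ := (Fintype.card X : ℂ)⁻¹ * ∑ y, f y with havg
  have hmean : ∑ y, (f - avg • 1) y = 0 := by simp [havg]
  have hT : ∀ n : ℕ, ‖twistedOp A.act hp ((√n)⁻¹ • ω)‖ ≤ 1 := fun n => norm_twistedOp_le hp _
  have hdiff := tendsto_pow_self_apply_zero hT
    (tendsto_twistedOp_inv_sqrt_smul hp ω) (A.tendsto_twistedOp_zero_pow hp hpos hmean)
  have hlim := hdiff.add ((hω.tendsto_twistedOp_pow_one A hp hpos).const_smul avg)
  simp only [map_sub, map_smul, sub_add_cancel, zero_add] at hlim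
  simpa [mul_comm avg] using tendsto_pi_nhds.1 hlim x

end CentralLimit

section Comparison

lemma tendsto_circleExp_inv_sqrt_mul {X : Type*} (h : X → ℝ) (f : X → ℂ) :
    Tendsto (fun n : ℕ => (fun x => (Circle.exp (-(((√n)⁻¹ • h) x)) : ℂ)) * f) atTop
      (nhds f) := by
  refine tendsto_pi_nhds.2 fun x => ?_
  have hcont : Continuous fun t : ℝ => (Circle.exp (-(t * h x)) : ℂ) * f x := by
    simp only [Circle.coe_exp]
    fun_prop
  exact (hcont.tendsto' 0 (f x) (by simp)).comp
    (tendsto_inv_sqrt_natCast.mono_right nhdsWithin_le_nhds)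

variable {G X ι : Type*} [Fintype X] {act : X → G → X} {ω : X → G → ℝ} {p p' : G → ℝ}

lemma twistedOp_eq_smul_mul_corrected (hp : IsProb p) (a : ℝ) (h : X → ℝ) (f : X → ℂ) :
    twistedOp act hp ω f = (Circle.exp a : ℂ) • ((fun x => (Circle.exp (h x) : ℂ)) *
      twistedOp act hp (corrected act ω a h) ((fun x => (Circle.exp (-h x) : ℂ)) * f)) := by
  funext x
  simp only [Pi.smul_apply, Pi.mul_apply, twistedOp_apply, smul_eq_mul, ← tsum_mul_left]
  refine tsum_congr fun g => ?_
  have hsplit : ω x g = a + h x + corrected act ω a h x g + -h (act x g) := by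
    rw [corrected]
    ring
  simp only [hsplit, Circle.exp_add, Circle.coe_mul, mul_smul_comm, mul_assoc]

lemma twistedOp_pow_eq_smul_mul_corrected (hp : IsProb p) (a : ℝ) (h : X → ℝ) (n : ℕ)
    (f : X → ℂ) :
    (twistedOp act hp ω ^ n) f = (Circle.exp a : ℂ) ^ n • ((fun x => (Circle.exp (h x) : ℂ)) *
      (twistedOp act hp (corrected act ω a h) ^ n) ((fun x => (Circle.exp (-h x) : ℂ)) * f)) := by
  have hcancel : ∀ k : X → ℂ, (fun x => (Circle.exp (-h x) : ℂ)) *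
      ((fun x => (Circle.exp (h x) : ℂ)) * k) = k := fun k => by
    funext x
    simp only [Pi.mul_apply, ← mul_assoc, ← Circle.coe_mul, ← Circle.exp_add, neg_add_cancel,
      Circle.exp_zero, Circle.coe_one, one_mul]
  induction n generalizing f with
  | zero =>
    funext x
    simp only [pow_zero, one_apply_eq_self, one_smul, Pi.mul_apply, ← mul_assoc, ← Circle.coe_mul,
      ← Circle.exp_add, add_neg_cancel, Circle.exp_zero, Circle.coe_one, one_mul]
  | succ n ih =>
    rw [pow_succ, mul_apply_eq_comp, ih, twistedOp_eq_smul_mul_corrected hp a h f, mul_smul_comm,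
      hcancel, map_smul, mul_smul_comm, smul_smul, pow_succ, pow_succ, mul_apply_eq_comp]

lemma norm_twistedOp_pow_apply_sub_eq (hp : IsProb p) (hp' : IsProb p') (a : ℝ) (h : X → ℝ)
    (n : ℕ) (f : X → ℂ) (x : X) :
    ‖(twistedOp act hp ω ^ n) f x - (twistedOp act hp' ω ^ n) f x‖ =
      ‖(twistedOp act hp (corrected act ω a h) ^ n) ((fun x => (Circle.exp (-h x) : ℂ)) * f) x -
        (twistedOp act hp' (corrected act ω a h) ^ n)
          ((fun x => (Circle.exp (-h x) : ℂ)) * f) x‖ := by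
  simp only [twistedOp_pow_eq_smul_mul_corrected (ω := ω) _ a h n f, Pi.smul_apply, Pi.mul_apply,
    smul_eq_mul, ← mul_sub]
  rw [norm_mul, norm_mul, norm_pow, Circle.norm_coe, Circle.norm_coe, one_pow, one_mul, one_mul]

variable [Group G] (A : LatticeCocycle G X ι)

lemma IsCentred.tendsto_twistedOp_pow_sub [Nonempty X] (hp : IsProb p) (hpos : EventuallyPos p)
    (hp' : IsProb p') (hpos' : EventuallyPos p') {a Q : ℝ} {h : X → ℝ}
    (hc : IsCentred (corrected A.act ω a h) p Q) (hc' : IsCentred (corrected A.act ω a h) p' Q)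
    (f : X → ℂ) (x : X) :
    Tendsto (fun n : ℕ => (twistedOp A.act hp ((√n)⁻¹ • ω) ^ n) f x -
      (twistedOp A.act hp' ((√n)⁻¹ • ω) ^ n) f x) atTop (nhds 0) := by
  have hclt : ∀ {q : G → ℝ} (hq : IsProb q), EventuallyPos q →
      IsCentred (corrected A.act ω a h) q Q →
      Tendsto (fun n : ℕ => (twistedOp A.act hq ((√n)⁻¹ • corrected A.act ω a h) ^ n)
        ((fun x => (Circle.exp (-(((√n)⁻¹ • h) x)) : ℂ)) * f)) atTop
        (nhds fun _ => Real.exp (-(Q / 2)) * ((Fintype.card X : ℂ)⁻¹ * ∑ y, f y)) :=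
    fun hq hqpos hqc => by
      have hT : ∀ n : ℕ, ‖twistedOp A.act hq ((√n)⁻¹ • corrected A.act ω a h) ^ n‖ ≤ 1 :=
        fun n => norm_twistedOp_pow_le hq _ n
      exact tendsto_apply_of_norm_le_one hT (tendsto_circleExp_inv_sqrt_mul h f)
        (tendsto_pi_nhds.2 (hqc.tendsto_twistedOp_pow A hq hqpos f))
  have hlim := tendsto_pi_nhds.1 ((hclt hp hpos hc).sub (hclt hp' hpos' hc')) x
  simp only [Pi.sub_apply, sub_self] at hlim
  refine squeeze_zero_norm (fun n => Eq.le ?_) (tendsto_zero_iff_norm_tendsto_zero.1 hlim)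
  simp only [smul_corrected]
  exact norm_twistedOp_pow_apply_sub_eq hp hp' _ _ n f x

/-- The walks driven by `p` and `p'` have the same drift and the same limiting covariance: each
form `⟨v, val⟩` is centred by the same constant and coboundary, leaving the same variance. -/
def LatticeCocycle.SameGaussianLimit [Fintype ι] (p p' : G → ℝ) : Prop :=
  ∀ v, ∃ a h Q, IsCentred (corrected A.act (A.form v) a h) p Q ∧
    IsCentred (corrected A.act (A.form v) a h) p' Q

end Comparison

section Fourier

variable {ι : Type*} [Fintype ι]

/-- Lebesgue measure on the cube `(-π, π]^ι`, a fundamental domain of the torus dual to `ℤ^ι`. -/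
noncomputable def cubeMeasure (ι : Type*) [Fintype ι] : Measure (ι → ℝ) :=
  volume.restrict (Set.univ.pi fun _ => Set.Ioc (-Real.pi) Real.pi)

lemma cubeMeasure_eq_pi :
    cubeMeasure ι = Measure.pi fun _ => volume.restrict (Set.Ioc (-Real.pi) Real.pi) := by
  rw [cubeMeasure, ← Measure.restrict_pi_pi, volume_pi]

instance : IsFiniteMeasure (cubeMeasure ι) := by
  rw [cubeMeasure_eq_pi]
  infer_instance

lemma integral_circleExp_mul_intCast (k : ℤ) :
    ∫ θ in Set.Ioc (-Real.pi) Real.pi, (Circle.exp (θ * k) : ℂ) =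
      if k = 0 then (2 * Real.pi : ℂ) else 0 := by
  rw [← intervalIntegral.integral_of_le (by linarith [Real.pi_pos])]
  split_ifs with hk
  · simp only [hk, Int.cast_zero, mul_zero, Circle.exp_zero, Circle.coe_one,
      intervalIntegral.integral_const, Complex.real_smul, mul_one]
    push_cast
    ring
  · have hkI : (k : ℂ) * Complex.I ≠ 0 := by simp [hk]
    have hexp : ∀ θ : ℝ, (Circle.exp (θ * k) : ℂ) = Complex.exp (k * Complex.I * θ) := fun θ => by
      rw [Circle.coe_exp]
      push_cast
      ring_nf
    simp_rw [hexp]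
    rw [integral_exp_mul_complex hkI, div_eq_zero_iff, sub_eq_zero,
      Complex.exp_eq_exp_iff_exists_int]
    exact Or.inl ⟨k, by push_cast; ring⟩

lemma integral_circleExp_sum_mul_intCast (k : ι → ℤ) :
    ∫ v : ι → ℝ, (Circle.exp (∑ i, v i * k i) : ℂ) ∂cubeMeasure ι =
      if k = 0 then (2 * Real.pi : ℂ) ^ Fintype.card ι else 0 := by
  have hprod : ∀ v : ι → ℝ, (Circle.exp (∑ i, v i * k i) : ℂ) =
      ∏ i, (Circle.exp (v i * k i) : ℂ) := fun v => by
    simp only [Circle.coe_exp, ← Complex.exp_sum, ← Finset.sum_mul, Complex.ofReal_sum]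
  simp_rw [hprod, cubeMeasure_eq_pi]
  rw [integral_fintype_prod_eq_prod (𝕜 := ℂ) (f := fun i θ => (Circle.exp (θ * k i) : ℂ))]
  simp_rw [integral_circleExp_mul_intCast]
  split_ifs with hk
  · simp [hk]
  · obtain ⟨i, hi⟩ := Function.ne_iff.1 hk
    exact Finset.prod_eq_zero (Finset.mem_univ i) (if_neg hi)

variable {G X : Type*} [Group G]

omit [Fintype ι] in
lemma LatticeCocycle.countable [Finite X] [Finite ι] (A : LatticeCocycle G X ι) (x : X) :
    Countable G :=
  (A.bij x).injective.countable

variable (A : LatticeCocycle G X ι)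

lemma LatticeCocycle.continuous_form (x : X) (g : G) : Continuous fun v => A.form v x g := by
  unfold form
  fun_prop

lemma LatticeCocycle.integral_circleExp_form_sub (x : X) {k g : G}
    (hact : A.act x k = A.act x g) :
    ∫ v, (Circle.exp (A.form v x k - A.form v x g) : ℂ) ∂cubeMeasure ι =
      if k = g then (2 * Real.pi : ℂ) ^ Fintype.card ι else 0 := by
  have hsub : ∀ v, A.form v x k - A.form v x g = ∑ i, v i * ((A.val x k - A.val x g) i : ℤ) :=
    fun v => by simp [form, mul_sub]
  have hiff : A.val x k - A.val x g = 0 ↔ k = g := by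
    rw [sub_eq_zero, ← (A.bij x).injective.eq_iff, Prod.mk.injEq, and_iff_right hact]
  simp only [hsub, integral_circleExp_sum_mul_intCast, hiff]

variable [Fintype X] {p p' : G → ℝ}

lemma LatticeCocycle.continuous_twistedOp_form (hp : IsProb p) (f : X → ℂ) :
    Continuous fun v => twistedOp A.act hp (A.form v) f :=
  continuous_iff_continuousAt.2 fun v =>
    tendsto_twistedOp hp (fun x g => (A.continuous_form x g).tendsto v) f

-- Fourier inversion on `G ≅ X × ℤ^ι`.
lemma LatticeCocycle.integral_twistedOp_form_single (hp : IsProb p) (x : X) (g : G) :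
    ∫ v, (Circle.exp (-A.form v x g) : ℂ) *
      twistedOp A.act hp (A.form v) (Pi.single (A.act x g) 1) x ∂cubeMeasure ι =
        (2 * Real.pi : ℂ) ^ Fintype.card ι * p g := by
  have := A.countable x
  let F : G → (ι → ℝ) → ℂ := fun k v => p k • ((Circle.exp (A.form v x k - A.form v x g) : ℂ) *
    Pi.single (M := fun _ => ℂ) (A.act x g) 1 (A.act x k))
  have hF_norm : ∀ k v, ‖F k v‖ ≤ p k := fun k v => by
    rw [norm_smul, norm_mul, Circle.norm_coe, one_mul, Real.norm_of_nonneg (hp.1 k)]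
    refine mul_le_of_le_one_right (hp.1 k) ((norm_le_pi_norm _ _).trans ?_)
    rw [Pi.norm_single, norm_one]
  have hF_int : ∀ k, Integrable (F k) (cubeMeasure ι) := fun k => by
    refine (integrable_const (p k)).mono' (Continuous.aestronglyMeasurable ?_)
      (ae_of_all _ (hF_norm k))
    exact ((continuous_subtype_val.comp (Circle.exp.continuous.comp
      ((A.continuous_form x k).sub (A.continuous_form x g)))).mul_const _).const_smul (p k)
  have hF_sum : Summable fun k => ∫ v, ‖F k v‖ ∂cubeMeasure ι :=
    .of_nonneg_of_le (fun k => integral_nonneg fun v => norm_nonneg _)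
      (fun k => (integral_mono (hF_int k).norm (integrable_const (p k)) (hF_norm k)).trans_eq
        (integral_const _)) (hp.2.summable.const_smul _)
  calc _ = ∫ v, ∑' k, F k v ∂cubeMeasure ι := by
        refine integral_congr_ae (ae_of_all _ fun v => ?_)
        simp only [F, twistedOp_apply, ← tsum_mul_left, mul_smul_comm, ← mul_assoc,
          ← Circle.coe_mul, ← Circle.exp_add, neg_add_eq_sub]
    _ = ∑' k, ∫ v, F k v ∂cubeMeasure ι :=
        (integral_tsum_of_summable_integral_norm hF_int hF_sum).symm
    _ = ∫ v, F g v ∂cubeMeasure ι := tsum_eq_single g fun k hk => by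
        by_cases hact : A.act x k = A.act x g
        · simp only [F, integral_smul, integral_mul_const, A.integral_circleExp_form_sub x hact,
            if_neg hk, zero_mul, smul_zero]
        · simp only [F, Pi.single_eq_of_ne hact, mul_zero, smul_zero, integral_zero]
    _ = _ := by
        simp only [F, Pi.single_eq_same, mul_one, integral_smul]
        rw [A.integral_circleExp_form_sub x rfl, if_pos rfl, Complex.real_smul, mul_comm]

lemma LatticeCocycle.abs_sub_le_integral (hp : IsProb p) (hp' : IsProb p') (x : X) (g : G) :
    |p g - p' g| ≤ ∫ v, ‖twistedOp A.act hp (A.form v) (Pi.single (A.act x g) 1) x -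
      twistedOp A.act hp' (A.form v) (Pi.single (A.act x g) 1) x‖ ∂cubeMeasure ι := by
  have hint : ∀ {q : G → ℝ} (hq : IsProb q), Integrable (fun v =>
      (Circle.exp (-A.form v x g) : ℂ) *
        twistedOp A.act hq (A.form v) (Pi.single (A.act x g) 1) x) (cubeMeasure ι) := fun hq => by
    refine (integrable_const (1 : ℝ)).mono' (Continuous.aestronglyMeasurable ?_)
      (ae_of_all _ fun v => ?_)
    · exact (continuous_subtype_val.comp
        (Circle.exp.continuous.comp (A.continuous_form x g).neg)).mul
          ((continuous_apply x).comp (A.continuous_twistedOp_form hq _))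
    · rw [norm_mul, Circle.norm_coe, one_mul]
      refine (norm_le_pi_norm _ x).trans
        (((twistedOp A.act hq _).le_of_opNorm_le (norm_twistedOp_le hq _) _).trans_eq ?_)
      rw [Pi.norm_single, norm_one, one_mul]
  have hpi : 1 ≤ (2 * Real.pi) ^ Fintype.card ι := one_le_pow₀ (by linarith [Real.pi_gt_three])
  calc |p g - p' g| ≤ (2 * Real.pi) ^ Fintype.card ι * |p g - p' g| :=
        le_mul_of_one_le_left (abs_nonneg _) hpi
    _ = ‖(2 * Real.pi : ℂ) ^ Fintype.card ι * p g - (2 * Real.pi : ℂ) ^ Fintype.card ι * p' g‖ := by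
        rw [← mul_sub, ← Complex.ofReal_sub, norm_mul, norm_pow, norm_mul, Complex.norm_ofNat,
          Complex.norm_real, Complex.norm_real, Real.norm_of_nonneg Real.pi_pos.le,
          Real.norm_eq_abs]
    _ ≤ _ := by
        rw [← A.integral_twistedOp_form_single hp x g, ← A.integral_twistedOp_form_single hp' x g,
          ← integral_sub (hint hp) (hint hp')]
        refine (norm_integral_le_integral_norm _).trans_eq (integral_congr_ae (ae_of_all _ ?_))
        intro v
        simp only [← mul_sub, norm_mul, Circle.norm_coe, one_mul]

end Fourier

section LocalLimit

variable {ι : Type*} [Fintype ι]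

lemma integrable_exp_neg_mul_sum_sq {c : ℝ} (hc : 0 < c) :
    Integrable fun w : ι → ℝ => Real.exp (-(c * ∑ i, w i ^ 2)) := by
  have hprod : ∀ w : ι → ℝ, Real.exp (-(c * ∑ i, w i ^ 2)) = ∏ i, Real.exp (-c * w i ^ 2) :=
    fun w => by rw [← Real.exp_sum, ← Finset.mul_sum, neg_mul]
  simp_rw [hprod]
  exact Integrable.fintype_prod (f := fun _ t => Real.exp (-c * t ^ 2))
    fun _ => integrable_exp_neg_mul_sq hc

lemma sqrt_pow_mul_integral_cubeMeasure {n : ℕ} (hn : 0 < n) (F : (ι → ℝ) → ℝ) :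
    √n ^ Fintype.card ι * ∫ v, F v ∂cubeMeasure ι =
      ∫ w, (Set.univ.pi fun _ => Set.Ioc (-Real.pi) Real.pi).indicator F ((√n)⁻¹ • w) := by
  have : 0 < √(n : ℝ) := Real.sqrt_pos.2 (Nat.cast_pos.2 hn)
  rw [Measure.integral_comp_smul, Module.finrank_fintype_fun_eq_card, inv_pow, inv_inv,
    abs_of_pos (by positivity), integral_indicator (.univ_pi fun _ => measurableSet_Ioc),
    cubeMeasure, smul_eq_mul]

lemma tendsto_sqrt_pow_mul_integral_cubeMeasure {D : ℕ → (ι → ℝ) → ℝ}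
    (hmeas : ∀ n, Measurable (D n)) {c C : ℝ} (hc : 0 < c) (hC : 0 ≤ C)
    (hdom : ∀ᶠ n : ℕ in atTop, ∀ v : ι → ℝ, (∀ i, |v i| ≤ Real.pi) →
      |D n v| ≤ C * Real.exp (-(c * (n * ∑ i, v i ^ 2))))
    (hlim : ∀ w, Tendsto (fun n : ℕ => D n ((√n)⁻¹ • w)) atTop (nhds 0)) :
    Tendsto (fun n : ℕ => √n ^ Fintype.card ι * ∫ v, D n v ∂cubeMeasure ι) atTop (nhds 0) := by
  let S : Set (ι → ℝ) := Set.univ.pi fun _ => Set.Ioc (-Real.pi) Real.pi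
  have hS_meas : MeasurableSet S := .univ_pi fun _ => measurableSet_Ioc
  have hconv : Tendsto (fun n : ℕ => ∫ w, S.indicator (D n) ((√n)⁻¹ • w)) atTop
      (nhds (∫ _ : ι → ℝ, (0 : ℝ))) := by
    refine tendsto_integral_filter_of_dominated_convergence
      (fun w => C * Real.exp (-(c * ∑ i, w i ^ 2))) (.of_forall fun n => ?_) ?_
      ((integrable_exp_neg_mul_sum_sq hc).const_mul C) (ae_of_all _ fun w => ?_)
    · exact (((hmeas n).indicator hS_meas).comp
        (measurable_const_smul (√n)⁻¹)).aestronglyMeasurable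
    · filter_upwards [hdom, eventually_gt_atTop 0] with n hn hn0
      refine ae_of_all _ fun w => ?_
      by_cases hw : (√n)⁻¹ • w ∈ S
      · rw [Set.indicator_of_mem hw]
        refine (hn _ fun i => abs_le.2 ⟨(hw i trivial).1.le, (hw i trivial).2⟩).trans_eq ?_
        have hn0' : (0 : ℝ) < n := Nat.cast_pos.2 hn0
        simp only [Pi.smul_apply, smul_eq_mul, mul_pow, inv_pow, Real.sq_sqrt hn0'.le,
          ← Finset.mul_sum, mul_inv_cancel_left₀ hn0'.ne']
      · rw [Set.indicator_of_notMem hw, norm_zero]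
        positivity
    · refine squeeze_zero_norm (fun n => ?_) (tendsto_zero_iff_norm_tendsto_zero.1 (hlim w))
      exact norm_indicator_le_norm_self _ _
  rw [integral_zero] at hconv
  refine hconv.congr' ?_
  filter_upwards [eventually_gt_atTop 0] with n hn
  rw [← sqrt_pow_mul_integral_cubeMeasure hn]

variable {G X : Type*} [Group G] [Fintype X] [Nonempty X] {A : LatticeCocycle G X ι}
  {p p' : G → ℝ}

lemma LatticeCocycle.SameGaussianLimit.tendsto_integral (hA : A.SameGaussianLimit p p')
    (hp : IsProb p) (hpos : EventuallyPos p) (hp' : IsProb p') (hpos' : EventuallyPos p')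
    (x y : X) :
    Tendsto (fun n : ℕ => √n ^ Fintype.card ι *
      ∫ v, ‖(twistedOp A.act hp (A.form v) ^ n) (Pi.single y 1) x -
        (twistedOp A.act hp' (A.form v) ^ n) (Pi.single y 1) x‖ ∂cubeMeasure ι)
      atTop (nhds 0) := by
  obtain ⟨c, hc, hb⟩ := A.exists_norm_twistedOp_form_pow_le hp hpos
  obtain ⟨c', hc', hb'⟩ := A.exists_norm_twistedOp_form_pow_le hp' hpos'
  refine tendsto_sqrt_pow_mul_integral_cubeMeasure (c := min c c') (C := 2) (fun n => ?_)
    (lt_min hc hc') zero_le_two ?_ fun w => ?_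
  · simp only [← A.twistedOp_form_convPow]
    exact ((((continuous_apply x).comp (A.continuous_twistedOp_form (isProb_convPow hp n) _)).sub
      ((continuous_apply x).comp (A.continuous_twistedOp_form (isProb_convPow hp' n) _))).norm
        ).measurable
  · filter_upwards [hb, hb'] with n hn hn' v hv
    have happly : ∀ {T : (X → ℂ) →L[ℂ] (X → ℂ)} {d : ℝ}, min c c' ≤ d →
        ‖T‖ ≤ Real.exp (-(d * (n * ∑ i, v i ^ 2))) →
        ‖T (Pi.single y 1) x‖ ≤ Real.exp (-(min c c' * (n * ∑ i, v i ^ 2))) := fun hd hT => by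
      refine (norm_le_pi_norm _ x).trans ((ContinuousLinearMap.le_of_opNorm_le _ hT _).trans ?_)
      rw [Pi.norm_single, norm_one, mul_one]
      gcongr
    rw [abs_norm, two_mul]
    exact norm_sub_le_of_le (happly (min_le_left _ _) (hn v hv))
      (happly (min_le_right _ _) (hn' v hv))
  · obtain ⟨a, h, Q, hQ, hQ'⟩ := hA w
    simp only [A.form_smul]
    exact tendsto_zero_iff_norm_tendsto_zero.1
      (hQ.tendsto_twistedOp_pow_sub A hp hpos hp' hpos' hQ' (Pi.single y 1) x)

lemma LatticeCocycle.SameGaussianLimit.tendstoUniformly (hA : A.SameGaussianLimit p p')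
    (hp : IsProb p) (hpos : EventuallyPos p) (hp' : IsProb p') (hpos' : EventuallyPos p') :
    TendstoUniformly (fun (n : ℕ) g => √n ^ Fintype.card ι * (convPow p n g - convPow p' n g)) 0
      atTop := by
  let x : X := Classical.arbitrary X
  rw [Metric.tendstoUniformly_iff]
  intro ε hε
  filter_upwards [eventually_all.2 fun y =>
    (hA.tendsto_integral hp hpos hp' hpos' x y).eventually_lt_const hε] with n hn g
  refine lt_of_le_of_lt ?_ (hn (A.act x g))
  rw [Pi.zero_apply, dist_zero_left, norm_mul, Real.norm_of_nonneg (by positivity),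
    Real.norm_eq_abs]
  simp only [← A.twistedOp_form_convPow]
  gcongr
  exact A.abs_sub_le_integral (isProb_convPow hp n) (isProb_convPow hp' n) x g

end LocalLimit

section Tightness

variable {G : Type*} {p q f k : G → ℝ}

lemma SqSummable.hasSum_mul_add_sq (hk : SqSummable q k) (hq : IsProb q)
    (h0 : ∑' g, q g * k g = 0) (c : ℝ) :
    HasSum (fun g => q g * (c + k g) ^ 2) (c ^ 2 + ∑' g, q g * k g ^ 2) := by
  have hlin := (hk.summable hq).hasSum
  rw [h0] at hlin
  have hsum := ((hq.2.mul_right (c ^ 2)).add (hlin.mul_left (2 * c))).add (Summable.hasSum hk)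
  rw [one_mul, mul_zero, add_zero] at hsum
  exact hsum.congr_fun fun g => by ring

variable [Group G]

-- Orthogonality of martingale increments.
lemma SqSummable.conv_of_mul_eq_add {F : G → ℝ} {K : G → G → ℝ} {C : ℝ} (hp : IsProb p)
    (hq : IsProb q) (hF : ∀ g h, F (g * h) = f g + K g h) (hf : SqSummable p f)
    (hK : ∀ g, SqSummable q (K g)) (hK0 : ∀ g, ∑' h, q h * K g h = 0)
    (hKC : ∀ g, ∑' h, q h * K g h ^ 2 ≤ C) :
    SqSummable (conv p q) F ∧
      ∑' g, conv p q g * F g ^ 2 ≤ ∑' g, p g * f g ^ 2 + C := by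
  have hinner : ∀ g, HasSum (fun h => q h * F (g * h) ^ 2) (f g ^ 2 + ∑' h, q h * K g h ^ 2) :=
    fun g => by simpa only [hF] using (hK g).hasSum_mul_add_sq hq (hK0 g) (f g)
  have hbound : ∀ g, p g * (f g ^ 2 + ∑' h, q h * K g h ^ 2) ≤ p g * f g ^ 2 + p g * C :=
    fun g => by
      rw [← mul_add]
      gcongr
      exacts [hp.1 g, hKC g]
  have hbound_sum := Summable.add hf (hp.2.summable.mul_right C)
  have hinner_nonneg : ∀ g, 0 ≤ ∑' h, q h * K g h ^ 2 := fun g =>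
    tsum_nonneg fun h => mul_nonneg (hq.1 h) (sq_nonneg _)
  have houter : Summable fun g => p g * (f g ^ 2 + ∑' h, q h * K g h ^ 2) :=
    .of_nonneg_of_le (fun g => mul_nonneg (hp.1 g) (add_nonneg (sq_nonneg _) (hinner_nonneg g)))
      hbound hbound_sum
  have hprod : Summable fun z : G × G => (p z.1 * q z.2) • F (z.1 * z.2) ^ 2 := by
    simp only [smul_eq_mul, mul_assoc]
    refine (summable_prod_of_nonneg fun z =>
      mul_nonneg (hp.1 _) (mul_nonneg (hq.1 _) (sq_nonneg _))).2 ⟨fun g => ?_, ?_⟩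
    · exact (hinner g).summable.mul_left (p g)
    · simpa only [tsum_mul_left, (hinner _).tsum_eq] using houter
  refine ⟨hp.summable_conv_smul hq (f := fun g => F g ^ 2) hprod, ?_⟩
  calc ∑' g, conv p q g * F g ^ 2 = ∑' g, p g * (f g ^ 2 + ∑' h, q h * K g h ^ 2) := by
        simpa only [smul_eq_mul, (hinner _).tsum_eq] using
          hp.tsum_conv_smul hq (f := fun g => F g ^ 2) hprod
    _ ≤ ∑' g, (p g * f g ^ 2 + p g * C) := houter.tsum_le_tsum hbound hbound_sum
    _ = ∑' g, p g * f g ^ 2 + C := by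
        rw [Summable.tsum_add hf (hp.2.summable.mul_right C), tsum_mul_right, hp.2.tsum_eq, one_mul]

variable {X ι : Type*} [Fintype ι] [Fintype X] (A : LatticeCocycle G X ι)

omit [Fintype X] in
lemma LatticeCocycle.corrected_form_mul (v : ι → ℝ) (a b : ℝ) (h : X → ℝ) (x : X) (g k : G) :
    corrected A.act (A.form v) (a + b) h x (g * k) =
      corrected A.act (A.form v) a h x g + corrected A.act (A.form v) b h (A.act x g) k := by
  simp only [corrected, A.form_mul, A.act_mul]
  ring

lemma IsCentred.sqSummable_convPow {v : ι → ℝ} {a Q : ℝ} {h : X → ℝ}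
    (hQ : IsCentred (corrected A.act (A.form v) a h) p Q) (hp : IsProb p) (x : X) (n : ℕ) :
    SqSummable (convPow p n) (corrected A.act (A.form v) (n * a) h x) ∧
      ∑' g, convPow p n g * corrected A.act (A.form v) (n * a) h x g ^ 2 ≤
        n * (Fintype.card X * Q) := by
  induction n with
  | zero =>
    have hzero : ∀ g, convPow p 0 g * corrected A.act (A.form v) ((0 : ℕ) * a) h x g ^ 2 = 0 :=
      fun g => by
        by_cases hg : g = 1
        · simp [hg, corrected, A.act_one, LatticeCocycle.form, A.val_one]
        · simp [convPow, hg]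
    simp only [SqSummable, hzero]
    simp [summable_zero]
  | succ n ih =>
    have hstep := SqSummable.conv_of_mul_eq_add (isProb_convPow hp n) hp
      (A.corrected_form_mul v (n * a) a h x) ih.1 (fun g => hQ.sqSummable _)
      (fun g => hQ.tsum_eq_zero _) fun g => hQ.tsum_sq_le hp _
    simp only [Nat.cast_succ, add_one_mul]
    exact ⟨hstep.1, hstep.2.trans (add_le_add_left ih.2 _)⟩

end Tightness

section TotalVariation

lemma summable_mul_inv_mul_sum_and_tsum_le {G ι : Type*} [Fintype ι] {p : G → ℝ} {f : ι → G → ℝ}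
    {C : ι → ℝ} {t : ℝ} (ht : 0 < t)
    (hf : ∀ i, SqSummable p (f i) ∧ ∑' g, p g * f i g ^ 2 ≤ t * C i) :
    (Summable fun g => p g * (t⁻¹ * ∑ i, f i g ^ 2)) ∧
      ∑' g, p g * (t⁻¹ * ∑ i, f i g ^ 2) ≤ ∑ i, C i := by
  simp only [mul_left_comm _ t⁻¹, Finset.mul_sum _ _ (p _), tsum_mul_left]
  refine ⟨(summable_sum fun i _ => (hf i).1).mul_left _, ?_⟩
  rw [inv_mul_le_iff₀ ht, Summable.tsum_finsetSum fun i _ => (hf i).1, Finset.mul_sum]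
  exact Finset.sum_le_sum fun i _ => (hf i).2

lemma IsProb.tsum_abs_sub_le {G : Type*} {p p' W : G → ℝ} (hp : IsProb p) (hp' : IsProb p')
    (hW : ∀ g, 0 ≤ W g) {r s : ℝ} (hr : 0 < r) (S : Finset G) (hS : ∀ g ∉ S, r ≤ W g)
    (hs : ∀ g, |p g - p' g| ≤ s) (hpW : Summable fun g => p g * W g)
    (hpW' : Summable fun g => p' g * W g) :
    ∑' g, |p g - p' g| ≤ S.card * s + r⁻¹ * (∑' g, p g * W g + ∑' g, p' g * W g) := by
  have hconst : HasSum (fun g => if g ∈ S then s else 0) (S.card * s) := by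
    simpa using hasSum_sum_of_ne_finset_zero (s := S) (f := fun g => if g ∈ S then s else 0)
      fun g hg => if_neg hg
  have htail := (hpW.hasSum.add hpW'.hasSum).mul_left r⁻¹
  refine (Summable.tsum_le_tsum (fun g => ?_) (hp.2.summable.sub hp'.2.summable).abs
    (hconst.add htail).summable).trans_eq (hconst.add htail).tsum_eq
  have hsum := add_nonneg (hp.1 g) (hp'.1 g)
  rw [← add_mul]
  split_ifs with hg
  · exact (hs g).trans (le_add_of_nonneg_right
      (mul_nonneg (inv_nonneg.2 hr.le) (mul_nonneg hsum (hW g))))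
  · calc |p g - p' g| ≤ p g + p' g :=
          abs_sub_le_iff.2 ⟨by linarith [hp'.1 g], by linarith [hp.1 g]⟩
      _ ≤ 0 + r⁻¹ * ((p g + p' g) * W g) := by
          rw [zero_add, inv_mul_eq_div, mul_div_assoc]
          exact le_mul_of_one_le_right hsum ((one_le_div hr).2 (hS g hg))

lemma tendsto_tv_of_tendstoUniformly_of_tight {G : Type*} {P P' W : ℕ → G → ℝ} {d : ℕ} {K : ℝ}
    (hP : ∀ n, IsProb (P n)) (hP' : ∀ n, IsProb (P' n)) (hW : ∀ n g, 0 ≤ W n g)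
    (hunif : TendstoUniformly (fun (n : ℕ) g => √n ^ d * (P n g - P' n g)) 0 atTop)
    (htight : ∀ᶠ n in atTop, (Summable fun g => P n g * W n g) ∧ ∑' g, P n g * W n g ≤ K)
    (htight' : ∀ᶠ n in atTop, (Summable fun g => P' n g * W n g) ∧ ∑' g, P' n g * W n g ≤ K)
    (hcard : ∀ R > 0, ∃ C : ℝ, ∀ᶠ n : ℕ in atTop, ∃ S : Finset G,
      S.card ≤ C * √n ^ d ∧ ∀ g ∉ S, R ≤ W n g) :
    Tendsto (fun n => tv (P n) (P' n)) atTop (nhds 0) := by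
  suffices hlim : Tendsto (fun n => ∑' g, |P n g - P' n g|) atTop (nhds 0) by
    simpa only [tv, mul_zero] using hlim.const_mul (1 / 2)
  rw [Metric.tendsto_nhds]
  intro ε hε
  obtain ⟨r, hr, hrK⟩ := exists_pos_mul_lt (half_pos hε) (K + K)
  obtain ⟨C, hC⟩ := hcard r⁻¹ (inv_pos.2 hr)
  obtain ⟨δ, hδ, hδC⟩ := exists_pos_mul_lt (half_pos hε) C
  filter_upwards [Metric.tendstoUniformly_iff.1 hunif δ hδ, htight, htight', hC,
    eventually_gt_atTop 0] with n hn ⟨hs, hsK⟩ ⟨hs', hsK'⟩ ⟨S, hSC, hSW⟩ hn0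
  have hpow : 0 < √(n : ℝ) ^ d := by positivity
  have hclose : ∀ g, |P n g - P' n g| ≤ δ / √n ^ d := fun g => by
    have := hn g
    rw [Pi.zero_apply, dist_zero_left, norm_mul, Real.norm_of_nonneg hpow.le,
      Real.norm_eq_abs] at this
    exact ((lt_div_iff₀' hpow).2 this).le
  rw [dist_zero_right, Real.norm_of_nonneg (tsum_nonneg fun _ => abs_nonneg _)]
  calc ∑' g, |P n g - P' n g|
      ≤ S.card * (δ / √n ^ d) + r⁻¹⁻¹ * (∑' g, P n g * W n g + ∑' g, P' n g * W n g) :=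
        (hP n).tsum_abs_sub_le (hP' n) (hW n) (inv_pos.2 hr) S hSW hclose hs hs'
    _ ≤ C * √n ^ d * (δ / √n ^ d) + r⁻¹⁻¹ * (K + K) := by gcongr
    _ = C * δ + (K + K) * r := by
        rw [inv_inv]
        field_simp
    _ < ε := by linarith

end TotalVariation

section LimitTheorem

lemma card_Icc_ceil_floor_le (a : ℝ) {b : ℝ} (hb : 0 ≤ b) :
    ((Finset.Icc ⌈a - b⌉ ⌊a + b⌋).card : ℝ) ≤ 2 * b + 1 := by
  rw [Int.card_Icc, ← Int.cast_natCast, Int.toNat_eq_max, Int.cast_max]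
  refine max_le ?_ (by rw [Int.cast_zero]; positivity)
  push_cast
  linarith [Int.floor_le (a + b), Int.le_ceil (a - b)]

variable {G X ι : Type*} [Group G] [Fintype X] [Fintype ι] (A : LatticeCocycle G X ι)

lemma LatticeCocycle.exists_finset_card_le (x : X) (a : ι → ℝ) {b : ℝ} (hb : 0 ≤ b) :
    ∃ S : Finset G, (S.card : ℝ) ≤ Fintype.card X * (2 * b + 1) ^ Fintype.card ι ∧
      ∀ g ∉ S, ∃ i, b < |A.val x g i - a i| := by
  let T : Finset (X × (ι → ℤ)) :=
    Finset.univ ×ˢ Fintype.piFinset fun i => Finset.Icc ⌈a i - b⌉ ⌊a i + b⌋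
  let e := Equiv.ofBijective _ (A.bij x)
  refine ⟨T.map e.symm.toEmbedding, ?_, fun g hg => ?_⟩
  · rw [Finset.card_map, Finset.card_product, Fintype.card_piFinset, Finset.card_univ,
      Nat.cast_mul, Nat.cast_prod, ← Finset.card_univ (α := ι), ← Finset.prod_const]
    gcongr with i
    exact card_Icc_ceil_floor_le (a i) hb
  · contrapose! hg
    refine Finset.mem_map_equiv.2 (Finset.mem_product.2 ⟨Finset.mem_univ _,
      Fintype.mem_piFinset.2 fun i => Finset.mem_Icc.2 ⟨Int.ceil_le.2 ?_, Int.le_floor.2 ?_⟩⟩)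
    · exact sub_le_of_abs_sub_le_left (hg i)
    · exact sub_le_iff_le_add'.1 (le_of_abs_le (hg i))

omit [Fintype X] in
lemma LatticeCocycle.exists_finset_card_le_sqrt_pow [Finite X] (x : X) (a : ι → ℝ) (h : ι → X → ℝ)
    (R : ℝ) :
    ∃ C : ℝ, ∀ n : ℕ, 0 < n → ∃ S : Finset G, S.card ≤ C * √n ^ Fintype.card ι ∧ ∀ g ∉ S,
      R ≤ (n : ℝ)⁻¹ * ∑ i, corrected A.act (A.form (Pi.single i 1)) (n * a i) (h i) x g ^ 2 := by
  have := Fintype.ofFinite X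
  obtain ⟨H, hH⟩ := (Set.finite_range fun z : ι × X × X => |h z.1 z.2.1 - h z.1 z.2.2|).bddAbove
  replace hH : ∀ i y z, |h i y - h i z| ≤ |H| := fun i y z =>
    (hH ⟨(i, y, z), rfl⟩).trans (le_abs_self H)
  refine ⟨Fintype.card X * (2 * (√R + |H|) + 1) ^ Fintype.card ι, fun n hn => ?_⟩
  have hn1 : 1 ≤ √(n : ℝ) := Real.one_le_sqrt.2 (Nat.one_le_cast.2 hn)
  obtain ⟨S, hS, hSg⟩ := A.exists_finset_card_le x (fun i => n * a i)
    (b := (√R + |H|) * √n) (by positivity)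
  refine ⟨S, hS.trans ?_, fun g hg => ?_⟩
  · rw [mul_assoc, ← mul_pow]
    gcongr
    linarith
  · obtain ⟨i, hi⟩ := hSg g hg
    have hform : A.form (Pi.single i 1) x g = A.val x g i := by
      simp [form, Pi.single_apply]
    have hlarge : √R * √n ≤ |corrected A.act (A.form (Pi.single i 1)) (n * a i) (h i) x g| := by
      rw [corrected, hform]
      have := abs_sub_abs_le_abs_add (A.val x g i - n * a i : ℝ) (h i (A.act x g) - h i x)
      nlinarith [hH i (A.act x g) x, abs_nonneg H]
    have hn0 : (0 : ℝ) < n := Nat.cast_pos.2 hn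
    rw [le_inv_mul_iff₀ hn0]
    calc n * R ≤ (√R * √n) ^ 2 := by
          rw [mul_pow, Real.sq_sqrt hn0.le, mul_comm]
          gcongr
          exact (le_max_left R 0).trans_eq Real.sq_sqrt'.symm
      _ ≤ corrected A.act (A.form (Pi.single i 1)) (n * a i) (h i) x g ^ 2 :=
          (pow_le_pow_left₀ (by positivity) hlarge 2).trans_eq (sq_abs _)
      _ ≤ _ := Finset.single_le_sum (f := fun i =>
          corrected A.act (A.form (Pi.single i 1)) (n * a i) (h i) x g ^ 2)
          (fun _ _ => sq_nonneg _) (Finset.mem_univ i)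

variable {A} {p p' : G → ℝ}

theorem LatticeCocycle.SameGaussianLimit.tendsto_tv [Nonempty X]
    (hA : A.SameGaussianLimit p p') (hp : IsProb p) (hpos : EventuallyPos p) (hp' : IsProb p')
    (hpos' : EventuallyPos p') :
    Tendsto (fun n => tv (convPow p n) (convPow p' n)) atTop (nhds 0) := by
  choose a h Q hQ hQ' using fun i : ι => hA (Pi.single i 1)
  let x : X := Classical.arbitrary X
  let f : ℕ → ι → G → ℝ := fun n i =>
    corrected A.act (A.form (Pi.single i 1)) (n * a i) (h i) x
  have htight : ∀ {q : G → ℝ}, IsProb q →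
      (∀ i, IsCentred (corrected A.act (A.form (Pi.single i 1)) (a i) (h i)) q (Q i)) →
      ∀ᶠ n : ℕ in atTop, (Summable fun g => convPow q n g * ((n : ℝ)⁻¹ * ∑ i, f n i g ^ 2)) ∧
        ∑' g, convPow q n g * ((n : ℝ)⁻¹ * ∑ i, f n i g ^ 2) ≤ ∑ i, Fintype.card X * Q i := by
    intro q hq hcq
    filter_upwards [eventually_gt_atTop 0] with n hn
    exact summable_mul_inv_mul_sum_and_tsum_le (Nat.cast_pos.2 hn)
      fun i => (hcq i).sqSummable_convPow A hq x n
  refine tendsto_tv_of_tendstoUniformly_of_tight (isProb_convPow hp) (isProb_convPow hp')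
    (fun n g => mul_nonneg (by positivity) (Finset.sum_nonneg fun i _ => sq_nonneg (f n i g)))
    (hA.tendstoUniformly hp hpos hp' hpos') (htight hp hQ) (htight hp' hQ') fun R _ => ?_
  obtain ⟨C, hC⟩ := A.exists_finset_card_le_sqrt_pow x a h R
  exact ⟨C, (eventually_gt_atTop 0).mono hC⟩

end LimitTheorem

section Existence

variable {G ι : Type*} [Group G]

lemma out_inv_mul_mul_out_mem (Λ : Subgroup G) (x : G ⧸ Λ) (g : G) :
    x.out⁻¹ * (g * (g⁻¹ • x).out) ∈ Λ := by
  rw [← QuotientGroup.eq, QuotientGroup.out_eq', ← smul_eq_mul, ← MulAction.Quotient.smul_mk,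
    QuotientGroup.out_eq', smul_inv_smul]

/-- The lattice cocycle over the coset space of a free abelian subgroup. Mathlib's `G ⧸ Λ` consists
of left cosets, so `G` acts on the right through inverses. -/
noncomputable def LatticeCocycle.ofSubgroup (Λ : Subgroup G) (ψ : Λ ≃* Multiplicative (ι → ℤ)) :
    LatticeCocycle G (G ⧸ Λ) ι where
  act x g := g⁻¹ • x
  val x g := (ψ ⟨x.out⁻¹ * (g * (g⁻¹ • x).out), out_inv_mul_mul_out_mem Λ x g⟩).toAdd
  act_one x := by rw [inv_one, one_smul]
  act_mul x g h := by rw [_root_.mul_inv_rev, SemigroupAction.mul_smul]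
  val_mul x g h := by
    rw [← toAdd_mul, ← map_mul]
    congr 2
    refine Subtype.ext ?_
    simp only [Subgroup.coe_mul, _root_.mul_inv_rev, SemigroupAction.mul_smul, mul_assoc,
      mul_inv_cancel_left]
  bij x := by
    refine ⟨fun g h hgh => ?_, fun ⟨y, k⟩ => ?_⟩
    · obtain ⟨hact, hval⟩ := Prod.ext_iff.1 hgh
      have hmul := congrArg Subtype.val (ψ.injective (Multiplicative.toAdd.injective hval))
      simp only at hact hmul
      rw [hact] at hmul
      exact mul_right_cancel (mul_left_cancel hmul)
    · obtain ⟨l, hl⟩ := ψ.surjective (Multiplicative.ofAdd k)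
      have hact : (x.out * l * y.out⁻¹)⁻¹ • x = y := by
        rw [inv_smul_eq_iff]
        nth_rw 1 [← QuotientGroup.out_eq' x]
        nth_rw 2 [← QuotientGroup.out_eq' y]
        rw [MulAction.Quotient.smul_mk, QuotientGroup.eq]
        simp [mul_assoc]
      refine ⟨x.out * l * y.out⁻¹, Prod.ext hact ?_⟩
      simp only
      rw [← toAdd_ofAdd k, ← hl]
      congr 2
      refine Subtype.ext ?_
      simp only [hact]
      group

lemma exists_finiteIndex_mulEquiv_of_commGroup (A : Type*) [CommGroup A] [Group.FG A] :
    ∃ (Λ : Subgroup A) (κ : Type) (_ : Finite κ), Λ.FiniteIndex ∧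
      Nonempty (Λ ≃* Multiplicative (κ → ℤ)) := by
  obtain ⟨τ, κ, _, _, p, hp, e, ⟨f⟩⟩ := CommGroup.equiv_free_prod_prod_multiplicative_zmod A
  have : ∀ i, NeZero (p i ^ e i) := fun i => ⟨pow_ne_zero _ (hp i).ne_zero⟩
  have : ∀ i, Finite (Multiplicative (ZMod (p i ^ e i))) := fun i =>
    inferInstanceAs (Finite (ZMod (p i ^ e i)))
  let torsion : A →* (i : τ) → Multiplicative (ZMod (p i ^ e i)) :=
    (MonoidHom.snd _ _).comp f.toMonoidHom
  let free : torsion.ker →* Multiplicative (κ → ℤ) :=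
    (MonoidHom.fst _ _).comp (f.toMonoidHom.comp torsion.ker.subtype)
  have hfree : Function.Bijective free := by
    refine ⟨fun a b hab => Subtype.ext (f.injective (Prod.ext hab ?_)), fun k => ?_⟩
    · exact a.2.trans b.2.symm
    · refine ⟨⟨f.symm (k, 1), ?_⟩, ?_⟩
      · exact MonoidHom.mem_ker.2 (congrArg Prod.snd (f.apply_symm_apply (k, 1)))
      · exact congrArg Prod.fst (f.apply_symm_apply (k, 1))
  exact ⟨torsion.ker, κ, inferInstance, inferInstance, ⟨MulEquiv.ofBijective free hfree⟩⟩

lemma VirtAbelian.exists_latticeCocycle (hVA : VirtAbelian G) (hFG : Group.FG G) :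
    ∃ (Λ : Subgroup G) (_ : Finite (G ⧸ Λ)) (κ : Type) (_ : Finite κ),
      Nonempty (LatticeCocycle G (G ⧸ Λ) κ) := by
  obtain ⟨A, hA, hcomm⟩ := hVA
  have : A.FiniteIndex := ⟨hA⟩
  let : CommGroup A := { (inferInstance : Group A) with mul_comm := hcomm }
  obtain ⟨Λ, κ, hκ, hΛ, ⟨ψ⟩⟩ := exists_finiteIndex_mulEquiv_of_commGroup A
  have : (Λ.map A.subtype).FiniteIndex := ⟨by
    rw [Subgroup.index_map_subtype]
    exact mul_ne_zero hΛ.index_ne_zero hA⟩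
  exact ⟨Λ.map A.subtype, inferInstance, κ, hκ, ⟨.ofSubgroup _
    ((Λ.equivMapOfInjective A.subtype A.subtype_injective).symm.trans ψ)⟩⟩

end Existence

section Marginals

variable {G H : Type*} {p : G × H → ℝ} {q : G → ℝ} {r : H → ℝ}

lemma IsProb.swap (hp : IsProb p) : IsProb fun z : H × G => p z.swap :=
  ⟨fun _ => hp.1 _, (Equiv.prodComm H G).hasSum_iff.2 hp.2⟩

lemma IsProb.hasSum_marg1_mul (hp : IsProb p) {f : G → ℝ} {a : ℝ}
    (hf : HasSum (fun z => p z * f z.1) a) : HasSum (fun g => marg1 p g * f g) a :=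
  hf.prod_fiberwise fun g => (hp.2.summable.prod_factor g).hasSum.mul_right (f g)

lemma IsProb.hasSum_marg2_mul (hp : IsProb p) {f : H → ℝ} {a : ℝ}
    (hf : HasSum (fun z => p z * f z.2) a) : HasSum (fun g => marg2 p g * f g) a :=
  hp.swap.hasSum_marg1_mul ((Equiv.prodComm H G).hasSum_iff.2 hf)

lemma isProb_marg1 (hp : IsProb p) : IsProb (marg1 p) :=
  ⟨fun _ => tsum_nonneg fun _ => hp.1 _, by
    simpa only [mul_one] using
      hp.hasSum_marg1_mul (f := fun _ => 1) (by simpa only [mul_one] using hp.2)⟩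

lemma isProb_marg2 (hp : IsProb p) : IsProb (marg2 p) := isProb_marg1 hp.swap

lemma marg1_pos (hp : IsProb p) {z : G × H} (hz : 0 < p z) : 0 < marg1 p z.1 :=
  (hp.2.summable.prod_factor z.1).tsum_pos (fun _ => hp.1 _) z.2 hz

lemma marg2_pos (hp : IsProb p) {z : G × H} (hz : 0 < p z) : 0 < marg2 p z.2 :=
  marg1_pos hp.swap (z := z.swap) hz

lemma IsProb.sqSummable_marg1_iff (hp : IsProb p) {f : G → ℝ} :
    SqSummable (marg1 p) f ↔ SqSummable p fun z => f z.1 := by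
  refine ⟨fun hf => (summable_prod_of_nonneg fun z => mul_nonneg (hp.1 z) (sq_nonneg _)).2
    ⟨fun g => (hp.2.summable.prod_factor g).mul_right (f g ^ 2), ?_⟩,
    fun hf => (hp.hasSum_marg1_mul (f := fun g => f g ^ 2) hf.hasSum).summable⟩
  simp only [tsum_mul_right]
  exact hf

lemma IsProb.sqSummable_marg2_iff (hp : IsProb p) {f : H → ℝ} :
    SqSummable (marg2 p) f ↔ SqSummable p fun z => f z.2 :=
  (hp.swap.sqSummable_marg1_iff (f := f)).trans
    ((Equiv.prodComm H G).summable_iff (f := fun z => p z * f z.2 ^ 2))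

lemma IsProb.prodMul (hq : IsProb q) (hr : IsProb r) : IsProb fun z : G × H => q z.1 * r z.2 :=
  ⟨fun z => mul_nonneg (hq.1 z.1) (hr.1 z.2), by
    simpa only [one_mul] using
      hq.2.mul hr.2 (hq.2.summable.mul_of_nonneg hr.2.summable hq.1 hr.1)⟩

lemma marg1_prodMul (q : G → ℝ) (hr : IsProb r) :
    marg1 (fun z : G × H => q z.1 * r z.2) = q := by
  funext g
  simp only [marg1, tsum_mul_left, hr.2.tsum_eq, mul_one]

lemma marg2_prodMul (hq : IsProb q) (r : H → ℝ) :
    marg2 (fun z : G × H => q z.1 * r z.2) = r := by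
  funext h
  simp only [marg2, tsum_mul_right, hq.2.tsum_eq, one_mul]

end Marginals

section Product

variable {G H X Y ι κ : Type*} [Group G] [Group H]

lemma convPow_prodMul {q : G → ℝ} {r : H → ℝ} (hq : IsProb q) (hr : IsProb r) (n : ℕ) :
    convPow (fun z : G × H => q z.1 * r z.2) n = fun z => convPow q n z.1 * convPow r n z.2 := by
  induction n with
  | zero =>
    funext z
    simp only [convPow, Prod.ext_iff, Prod.fst_one, Prod.snd_one, ite_and, ite_mul, one_mul,
      zero_mul]
  | succ n ih =>
    funext z
    have hqn := isProb_convPow hq n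
    have hrn := isProb_convPow hr n
    have hsum := (hqn.summable_conv hq z.1).mul_of_nonneg (hrn.summable_conv hr z.2)
      (fun g => mul_nonneg (hqn.1 g) (hq.1 _)) fun g => mul_nonneg (hrn.1 g) (hr.1 _)
    simp only [convPow, ih, conv]
    rw [(hqn.summable_conv hq z.1).tsum_mul_tsum (hrn.summable_conv hr z.2) hsum]
    exact tsum_congr fun w => mul_mul_mul_comm _ _ _ _

lemma convPow_pos_map {p : G → ℝ} {q : H → ℝ} (hp : IsProb p) (hq : IsProb q) (f : G →* H)
    (hf : ∀ g, 0 < p g → 0 < q (f g)) (n : ℕ) {g : G} (hg : 0 < convPow p n g) :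
    0 < convPow q n (f g) := by
  induction n generalizing g with
  | zero =>
    obtain rfl : g = 1 := by
      by_contra hne
      simp [convPow, hne] at hg
    simp [convPow]
  | succ n ih =>
    obtain ⟨h, hh, hhg⟩ := ((isProb_convPow hp n).conv_pos_iff hp).1 hg
    refine ((isProb_convPow hq n).conv_pos_iff hq).2 ⟨f h, ih hh, ?_⟩
    rw [← map_inv, ← map_mul]
    exact hf _ hhg

lemma EventuallyPos.map {p : G → ℝ} {q : H → ℝ} (hpos : EventuallyPos p) (hp : IsProb p)
    (hq : IsProb q) (f : G →* H) (hfs : Function.Surjective f)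
    (hf : ∀ g, 0 < p g → 0 < q (f g)) : EventuallyPos q :=
  hfs.forall.2 fun g => (hpos g).mono fun n hn => convPow_pos_map hp hq f hf n hn

/-- The product cocycle, with values in `ℤ^ι × ℤ^κ ≃ ℤ^(ι ⊕ κ)`. -/
def LatticeCocycle.prod (A : LatticeCocycle G X ι) (B : LatticeCocycle H Y κ) :
    LatticeCocycle (G × H) (X × Y) (ι ⊕ κ) where
  act z g := (A.act z.1 g.1, B.act z.2 g.2)
  val z g := Sum.elim (A.val z.1 g.1) (B.val z.2 g.2)
  act_one z := Prod.ext (A.act_one z.1) (B.act_one z.2)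
  act_mul z g h := Prod.ext (A.act_mul z.1 g.1 h.1) (B.act_mul z.2 g.2 h.2)
  val_mul z g h := by
    rw [Prod.fst_mul, Prod.snd_mul, A.val_mul, B.val_mul]
    exact funext (Sum.rec (fun _ => rfl) fun _ => rfl)
  bij z := by
    refine ⟨fun g g' hgg' => ?_, fun ⟨⟨x, y⟩, k⟩ => ?_⟩
    · obtain ⟨hact, hval⟩ := Prod.ext_iff.1 hgg'
      obtain ⟨hX, hY⟩ := Prod.ext_iff.1 hact
      exact Prod.ext
        ((A.bij z.1).injective (Prod.ext hX (funext fun i => congrFun hval (Sum.inl i))))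
        ((B.bij z.2).injective (Prod.ext hY (funext fun i => congrFun hval (Sum.inr i))))
    · obtain ⟨g, rfl, hg⟩ := A.exists_act_eq_val_eq z.1 x (k ∘ Sum.inl)
      obtain ⟨h, rfl, hh⟩ := B.exists_act_eq_val_eq z.2 y (k ∘ Sum.inr)
      exact ⟨(g, h), Prod.ext rfl (by simp only [hg, hh, Sum.elim_comp_inl_inr])⟩

end Product

section Moments

variable {G X ι : Type*} [Group G]

lemma exists_list_prod_eq_length_wordLength {S : Finset G} (hinv : ∀ s ∈ S, s⁻¹ ∈ S)
    (hS : Subgroup.closure (S : Set G) = ⊤) (g : G) :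
    ∃ l : List G, (∀ s ∈ l, s ∈ S) ∧ l.length = wordLength S g ∧ l.prod = g := by
  refine Nat.sInf_mem (s := {n | ∃ l : List G, (∀ s ∈ l, s ∈ S) ∧ l.length = n ∧ l.prod = g}) ?_
  have hg : g ∈ Subgroup.closure (S : Set G) := hS ▸ Subgroup.mem_top g
  rw [← Subgroup.mem_toSubmonoid, Subgroup.closure_toSubmonoid] at hg
  obtain ⟨l, hl, hlg⟩ := Submonoid.exists_list_of_mem_closure hg
  refine ⟨l.length, l, fun s hs => (hl s hs).elim id fun h => ?_, rfl, hlg⟩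
  exact inv_inv s ▸ hinv _ (Set.mem_inv.1 h)

lemma LatticeCocycle.exists_abs_val_le (A : LatticeCocycle G X ι) [Finite X] [Finite ι]
    {S : Finset G} (hinv : ∀ s ∈ S, s⁻¹ ∈ S) (hS : Subgroup.closure (S : Set G) = ⊤) :
    ∃ C : ℝ, ∀ x g i, |(A.val x g i : ℝ)| ≤ C * wordLength S g := by
  obtain ⟨C, hC⟩ := (Set.finite_range fun z : X × S × ι => |(A.val z.1 z.2.1 z.2.2 : ℝ)|).bddAbove
  have hlist : ∀ l : List G, (∀ s ∈ l, s ∈ S) →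
      ∀ x i, |(A.val x l.prod i : ℝ)| ≤ C * l.length := by
    intro l
    induction l with
    | nil => simp [A.val_one]
    | cons s l ih =>
      intro hl x i
      obtain ⟨hs, hl⟩ := List.forall_mem_cons.1 hl
      have hhead : |(A.val x s i : ℝ)| ≤ C := hC ⟨(x, ⟨s, hs⟩, i), rfl⟩
      rw [List.prod_cons, A.val_mul, Pi.add_apply, List.length_cons]
      push_cast
      linarith [abs_add_le (A.val x s i : ℝ) (A.val (A.act x s) l.prod i), ih hl (A.act x s) i]
  refine ⟨C, fun x g i => ?_⟩
  obtain ⟨l, hl, hlength, rfl⟩ := exists_list_prod_eq_length_wordLength hinv hS g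
  exact hlength ▸ hlist l hl x i

lemma FinSecondMoment.sqSummable_val {p : G → ℝ} (h : FinSecondMoment p) (hp : IsProb p)
    (A : LatticeCocycle G X ι) [Finite X] [Finite ι] (x : X) (i : ι) :
    SqSummable p fun g => (A.val x g i : ℝ) := by
  obtain ⟨S, hinv, hS, hsum⟩ := h
  obtain ⟨C, hC⟩ := A.exists_abs_val_le hinv hS
  refine (hsum.mul_left (C ^ 2)).of_nonneg_of_le (fun g => mul_nonneg (hp.1 g) (sq_nonneg _))
    fun g => ?_
  calc p g * (A.val x g i : ℝ) ^ 2 ≤ p g * (C * wordLength S g) ^ 2 := by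
        rw [← sq_abs]
        exact mul_le_mul_of_nonneg_left (pow_le_pow_left₀ (abs_nonneg _) (hC x g i) 2) (hp.1 g)
    _ = C ^ 2 * ((wordLength S g : ℝ) ^ 2 * p g) := by ring

end Moments

section Decoupling

variable {G H X Y ι κ : Type*} {p : G × H → ℝ}

lemma IsProb.hasSum_mul_add_of_marg (hp : IsProb p) {f : G → ℝ} {k : H → ℝ}
    (hf : Summable fun s => p s * f s.1) (hk : Summable fun s => p s * k s.2) :
    HasSum (fun s => p s * (f s.1 + k s.2)) (∑' g, marg1 p g * f g + ∑' h, marg2 p h * k h) := by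
  rw [(hp.hasSum_marg1_mul hf.hasSum).tsum_eq, (hp.hasSum_marg2_mul hk.hasSum).tsum_eq]
  simpa only [mul_add] using hf.hasSum.add hk.hasSum

lemma IsProb.tsum_mul_add_sq_of_marg (hp : IsProb p) {f : G → ℝ} {k : H → ℝ}
    (hf : SqSummable (marg1 p) f) (hk : SqSummable (marg2 p) k) :
    ∑' s, p s * (f s.1 + k s.2) ^ 2 = ∑' g, marg1 p g * f g ^ 2 + ∑' h, marg2 p h * k h ^ 2 +
      2 * ∑' s, p s * (f s.1 * k s.2) := by
  have hf' := hp.sqSummable_marg1_iff.1 hf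
  have hk' := hp.sqSummable_marg2_iff.1 hk
  have hsq := hp.hasSum_mul_add_of_marg (f := fun g => f g ^ 2) (k := fun h => k h ^ 2) hf' hk'
  refine ((hsq.add ((hf'.summable_mul hk' hp).hasSum.mul_left 2)).congr_fun fun s => ?_).tsum_eq
  ring

variable [Fintype X] [Fintype Y]

lemma sum_tsum_mul_mul_eq_zero_of_sum_eq_const (hp : IsProb p) {ω : X → G → ℝ} {k : H → ℝ} {c : ℝ}
    (hω : ∀ x, SqSummable (marg1 p) (ω x)) (hk : SqSummable (marg2 p) k)
    (hk0 : ∑' h, marg2 p h * k h = 0) (hc : ∀ g, ∑ x, ω x g = c) :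
    ∑ x, ∑' s, p s * (ω x s.1 * k s.2) = 0 := by
  have hk' := hp.sqSummable_marg2_iff.1 hk
  calc ∑ x, ∑' s, p s * (ω x s.1 * k s.2) = ∑' s, ∑ x, p s * (ω x s.1 * k s.2) :=
        (Summable.tsum_finsetSum fun x _ =>
          (hp.sqSummable_marg1_iff.1 (hω x)).summable_mul hk' hp).symm
    _ = ∑' s, c * (p s * k s.2) := tsum_congr fun s => by
        rw [← Finset.mul_sum, ← Finset.sum_mul, hc]
        ring
    _ = c * ∑' h, marg2 p h * k h := by
        rw [tsum_mul_left, (hp.hasSum_marg2_mul (hk'.summable hp).hasSum).tsum_eq]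
    _ = 0 := by rw [hk0, mul_zero]

/-- The covariance of `ω` and `η`, averaged over `X × Y`, vanishes because `∑ x, ω x g` does not
depend on `g`: the limiting variance sees the coupling only through its marginals. -/
lemma IsCentred.prod (hp : IsProb p) {ω : X → G → ℝ} {η : Y → H → ℝ} {Q R c : ℝ}
    (hω : IsCentred ω (marg1 p) Q) (hη : IsCentred η (marg2 p) R) (hc : ∀ g, ∑ x, ω x g = c) :
    IsCentred (fun (z : X × Y) s => ω z.1 s.1 + η z.2 s.2) p (Q + R) := by
  have hω' := fun x => hp.sqSummable_marg1_iff.1 (hω.sqSummable x)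
  have hη' := fun y => hp.sqSummable_marg2_iff.1 (hη.sqSummable y)
  refine ⟨fun z => (hω' z.1).add (hη' z.2) hp, fun z => ?_, ?_⟩
  · rw [(hp.hasSum_mul_add_of_marg ((hω' z.1).summable hp) ((hη' z.2).summable hp)).tsum_eq,
      hω.tsum_eq_zero, hη.tsum_eq_zero, add_zero]
  · have hcross := fun y => sum_tsum_mul_mul_eq_zero_of_sum_eq_const hp hω.sqSummable
      (hη.sqSummable y) (hη.tsum_eq_zero y) hc
    simp only [hp.tsum_mul_add_sq_of_marg (hω.sqSummable _) (hη.sqSummable _),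
      Fintype.sum_prod_type_right, Finset.sum_add_distrib, ← Finset.mul_sum, hcross,
      hω.sum_tsum_sq, Finset.sum_const, Finset.card_univ, Fintype.card_prod, nsmul_eq_mul]
    rw [hη.sum_tsum_sq]
    push_cast
    ring

variable [Group G] [Group H] [Fintype ι] [Fintype κ] (A : LatticeCocycle G X ι)

omit [Fintype X] [Fintype Y] in
lemma LatticeCocycle.corrected_form_prod (B : LatticeCocycle H Y κ) (v : ι ⊕ κ → ℝ) (a b : ℝ)
    (h : X → ℝ) (k : Y → ℝ) :
    corrected (A.prod B).act ((A.prod B).form v) (a + b) (fun z => h z.1 + k z.2) = fun z s =>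
      corrected A.act (A.form (v ∘ Sum.inl)) a h z.1 s.1 +
        corrected B.act (B.form (v ∘ Sum.inr)) b k z.2 s.2 := by
  funext z s
  simp only [corrected, form, prod, Fintype.sum_sum_type, Sum.elim_inl, Sum.elim_inr,
    Function.comp_apply]
  ring

omit [Fintype ι] in
/-- `g ↦ ∑ x, val x g` is the transfer homomorphism. -/
lemma LatticeCocycle.sum_val_eq_zero (hhom : ∀ (f : G →* Multiplicative ℤ) (g : G), f g = 1)
    (g : G) (i : ι) : ∑ x, A.val x g i = 0 := by
  let transferHom : G →* Multiplicative ℤ :=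
    { toFun := fun g => Multiplicative.ofAdd (∑ x, A.val x g i)
      map_one' := by simp only [A.val_one, Pi.zero_apply, Finset.sum_const_zero, ofAdd_zero]
      map_mul' := fun g h => by
        simp only [A.val_mul, Pi.add_apply, Finset.sum_add_distrib, ofAdd_add]
        rw [A.sum_act g fun x => A.val x h i] }
  exact Multiplicative.ofAdd.injective (hhom transferHom g)

lemma LatticeCocycle.sum_corrected_form_eq (hval : ∀ g i, ∑ x, A.val x g i = 0) (v : ι → ℝ)
    (a : ℝ) (h : X → ℝ) (g : G) :
    ∑ x, corrected A.act (A.form v) a h x g = -(Fintype.card X * a) := by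
  have hform : ∑ x, A.form v x g = 0 := by
    simp only [form]
    rw [Finset.sum_comm]
    simp only [← Finset.mul_sum, ← Int.cast_sum, hval, Int.cast_zero, mul_zero,
      Finset.sum_const_zero]
  simp only [corrected, Finset.sum_add_distrib, Finset.sum_sub_distrib, hform, A.sum_act g h,
    Finset.sum_const, Finset.card_univ, nsmul_eq_mul]
  ring

omit [Fintype X] in
lemma LatticeCocycle.sqSummable_form {q : G → ℝ} (hq : IsProb q)
    (hval : ∀ x i, SqSummable q fun g => (A.val x g i : ℝ)) (v : ι → ℝ) (x : X) :
    SqSummable q (A.form v x) :=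
  SqSummable.sum hq Finset.univ (f := fun i g => v i * (A.val x g i : ℝ)) fun i _ =>
    (hval x i).const_mul (v i)

lemma LatticeCocycle.sameGaussianLimit_prodMul [Nonempty X] [Nonempty Y]
    (B : LatticeCocycle H Y κ) (hp : IsProb p) (hpos : EventuallyPos p) (h2 : FinSecondMoment p)
    (hval : ∀ g i, ∑ x, A.val x g i = 0) :
    (A.prod B).SameGaussianLimit p fun z => marg1 p z.1 * marg2 p z.2 := by
  intro v
  have hq := isProb_marg1 hp
  have hr := isProb_marg2 hp
  have hA : ∀ x i, SqSummable (marg1 p) fun g => (A.val x g i : ℝ) := fun x i =>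
    (hp.sqSummable_marg1_iff (f := fun g => (A.val x g i : ℝ))).2
      (h2.sqSummable_val hp (A.prod B) (x, Classical.arbitrary Y) (Sum.inl i))
  have hB : ∀ y j, SqSummable (marg2 p) fun g => (B.val y g j : ℝ) := fun y j =>
    (hp.sqSummable_marg2_iff (f := fun g => (B.val y g j : ℝ))).2
      (h2.sqSummable_val hp (A.prod B) (Classical.arbitrary X, y) (Sum.inr j))
  obtain ⟨a, h, Q, hQ⟩ := A.exists_isCentred_corrected hq
    (hpos.map hp hq (MonoidHom.fst G H) Prod.fst_surjective fun _ => marg1_pos hp)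
    (A.sqSummable_form hq hA (v ∘ Sum.inl))
  obtain ⟨b, k, R, hR⟩ := B.exists_isCentred_corrected hr
    (hpos.map hp hr (MonoidHom.snd G H) Prod.snd_surjective fun _ => marg2_pos hp)
    (B.sqSummable_form hr hB (v ∘ Sum.inr))
  have hsum := A.sum_corrected_form_eq hval (v ∘ Sum.inl) a h
  refine ⟨a + b, fun z => h z.1 + k z.2, Q + R, ?_⟩
  rw [A.corrected_form_prod B]
  refine ⟨hQ.prod hp hR hsum, IsCentred.prod (hq.prodMul hr) ?_ ?_ hsum⟩
  · rwa [marg1_prodMul _ hr]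
  · rwa [marg2_prodMul hq]

omit [Fintype Y] [Fintype ι] [Fintype κ] in
theorem LatticeCocycle.tendsto_tv_prodMul [Finite Y] [Finite ι] [Finite κ] [Nonempty X] [Nonempty Y]
    (B : LatticeCocycle H Y κ) (hp : IsProb p) (hpos : EventuallyPos p) (h2 : FinSecondMoment p)
    (hval : ∀ g i, ∑ x, A.val x g i = 0) :
    Tendsto (fun n => tv (convPow p n)
      (fun z => convPow (marg1 p) n z.1 * convPow (marg2 p) n z.2)) atTop (nhds 0) := by
  have := Fintype.ofFinite Y
  have := Fintype.ofFinite ι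
  have := Fintype.ofFinite κ
  have hq := isProb_marg1 hp
  have hr := isProb_marg2 hp
  have hpos' : EventuallyPos fun z : G × H => marg1 p z.1 * marg2 p z.2 :=
    hpos.map hp (hq.prodMul hr) (MonoidHom.id _) Function.surjective_id fun _ hz =>
      mul_pos (marg1_pos hp hz) (marg2_pos hp hz)
  simp only [← convPow_prodMul hq hr]
  exact (A.sameGaussianLimit_prodMul B hp hpos h2 hval).tendsto_tv hp hpos (hq.prodMul hr) hpos'

end Decoupling

/-- Decoupling: if `Γ₁` admits no nonzero homomorphism onto `ℤ`, then a
coupled aperiodic finite-second-moment random walk on `Γ₁ × Γ₂` decouples in total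
variation from the product of its marginals. -/
theorem decoupling_of_no_hom_to_int
    {Γ₁ : Type*} [Group Γ₁] [Countable Γ₁] {Γ₂ : Type*} [Group Γ₂] [Countable Γ₂]
    (hFG₁ : Group.FG Γ₁) (hVA₁ : VirtAbelian Γ₁)
    (hFG₂ : Group.FG Γ₂) (hVA₂ : VirtAbelian Γ₂)
    (ν : Γ₁ × Γ₂ → ℝ) (hν : IsProb ν) (hap : Aperiodic ν) (hmom : FinSecondMoment ν)
    (hnd : Nondeg ν)
    (hhom : ∀ φ : Γ₁ →* Multiplicative ℤ, ∀ γ : Γ₁, φ γ = 1) :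
    Tendsto (fun n : ℕ => tv (convPow ν n)
        (fun p : Γ₁ × Γ₂ => convPow (marg1 ν) n p.1 * convPow (marg2 ν) n p.2))
      atTop (nhds 0) := by
  obtain ⟨Λ₁, _, ι₁, _, ⟨A⟩⟩ := hVA₁.exists_latticeCocycle hFG₁
  obtain ⟨Λ₂, _, ι₂, _, ⟨B⟩⟩ := hVA₂.exists_latticeCocycle hFG₂
  have := Fintype.ofFinite (Γ₁ ⧸ Λ₁)
  exact A.tendsto_tv_prodMul B hν (hnd.eventuallyPos hν hap) hmom (A.sum_val_eq_zero hhom)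

end NSVA
end

section
/- Let μ be a non-degenerate probability measure on Γ with finite second moment, and let ζ := (1/#F)·∑_{x∈Δ}∑_{s∈Γ} μ(s)·α(x,s) ∈ ℝ^m be the drift. Then there exists a constant C > 0 such that for all n ∈ ℕ and all real r > 0, ∑_{γ ∈ Γ : ‖Φ(γ) − n·ζ‖ ≥ r} μ_n(γ) ≤ C·n/r². -/
open scoped BigOperators Classical
open Filter Matrix MeasureTheory

namespace NSVA

/-!
The coset `Λ w_n` of the random walk `w_n` is a Markov chain on the finite set `Δ` whose steps are
permutations, so its stationary measure is uniform. Each coordinate of the cocycle `α` can therefore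
be made harmonic by subtracting a differential `df`: the Poisson equation for this chain is solvable
as soon as the chain has no nonconstant harmonic function, and the energy identity
`∑ₓ ∑ₛ μ(s) (f(x^s) - f(x))² = -2 ⟨f, Lf⟩` shows that a harmonic function is invariant under the
support of `μ`. Consequently `Φ_i(w_n) - f(x_n) + f(x_0) - nζ_i`, where `x_n ∈ Δ` represents
`Λ w_n`, is a martingale with bounded conditional variances, so its second moment is `O(n)`. The
correction `f(x_n) - f(x_0)` is bounded, and the tail estimate is Chebyshev's inequality.
-/

section MeanLE

variable {Z ι : Type*} {p g g' : Z → ℝ} {b c c' : ℝ}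

/-- The function `g` is integrable with respect to the weights `p`, and its integral is at most `c`.
Summability is part of the definition because the `tsum` of a non-summable family is `0`. -/
def MeanLE (p g : Z → ℝ) (c : ℝ) : Prop :=
  (Summable fun z => p z * g z) ∧ ∑' z, p z * g z ≤ c

lemma meanLE_of_hasSum (h : HasSum (fun z => p z * g z) c) : MeanLE p g c :=
  ⟨h.summable, h.tsum_eq.le⟩

lemma IsProb.meanLE_const (hp : IsProb p) (b : ℝ) : MeanLE p (fun _ => b) b :=
  meanLE_of_hasSum <| by simpa only [one_mul] using hp.2.mul_right b

namespace MeanLE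

lemma mono_right (h : MeanLE p g c) (hc : c ≤ c') : MeanLE p g c' :=
  ⟨h.1, h.2.trans hc⟩

lemma mono_left (h : MeanLE p g c) (hp : ∀ z, 0 ≤ p z) (hg' : ∀ z, 0 ≤ g' z)
    (hle : ∀ z, g' z ≤ g z) : MeanLE p g' c := by
  have hle' : ∀ z, p z * g' z ≤ p z * g z := fun z => mul_le_mul_of_nonneg_left (hle z) (hp z)
  have hs : Summable fun z => p z * g' z :=
    h.1.of_nonneg_of_le (fun z => mul_nonneg (hp z) (hg' z)) hle'
  exact ⟨hs, (hs.tsum_le_tsum hle' h.1).trans h.2⟩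

lemma add (h : MeanLE p g c) (h' : MeanLE p g' c') :
    MeanLE p (fun z => g z + g' z) (c + c') := by
  simp only [MeanLE, mul_add]
  exact ⟨h.1.add h'.1, (h.1.tsum_add h'.1).trans_le (add_le_add h.2 h'.2)⟩

lemma const_mul (h : MeanLE p g c) (hb : 0 ≤ b) : MeanLE p (fun z => b * g z) (b * c) := by
  simp only [MeanLE, mul_left_comm _ b]
  exact ⟨h.1.mul_left b, tsum_mul_left.trans_le (mul_le_mul_of_nonneg_left h.2 hb)⟩

lemma finset_sum {t : Finset ι} {g : ι → Z → ℝ} {c : ι → ℝ}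
    (h : ∀ i ∈ t, MeanLE p (g i) (c i)) : MeanLE p (fun z => ∑ i ∈ t, g i z) (∑ i ∈ t, c i) := by
  simp only [MeanLE, Finset.mul_sum]
  exact ⟨summable_sum fun i hi => (h i hi).1,
    (Summable.tsum_finsetSum fun i hi => (h i hi).1).trans_le
      (Finset.sum_le_sum fun i hi => (h i hi).2)⟩

lemma tsum_subtype_le_div (h : MeanLE p g c) (hp : ∀ z, 0 ≤ p z) (hps : Summable p)
    (hg : ∀ z, 0 ≤ g z) {t : ℝ} (ht : 0 < t) {P : Z → Prop} (hP : ∀ z, P z → t ≤ g z) :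
    ∑' z : {z // P z}, p z ≤ c / t := by
  have hle : ∀ z : {z // P z}, p z * t ≤ p z * g z := fun z =>
    mul_le_mul_of_nonneg_left (hP z z.2) (hp z)
  rw [le_div_iff₀ ht, ← tsum_mul_right]
  calc ∑' z : {z // P z}, p z * t
      ≤ ∑' z : {z // P z}, p z * g z :=
        ((hps.mul_right t).subtype P).tsum_le_tsum hle (h.1.subtype P)
    _ ≤ ∑' z, p z * g z := h.1.tsum_subtype_le _ {z | P z} fun z => mul_nonneg (hp z) (hg z)
    _ ≤ c := h.2

end MeanLE

end MeanLE

section Convolution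

variable {G : Type*} [Group G] {p μ ν : G → ℝ}

lemma hasSum_conv_mul {g : G → ℝ} {a : ℝ}
    (h : HasSum (fun z : G × G => p z.1 * (μ z.2 * g (z.1 * z.2))) a) :
    HasSum (fun γ => conv p μ γ * g γ) a := by
  let e : G × G ≃ G × G :=
    { toFun := fun z => (z.2, z.2⁻¹ * z.1)
      invFun := fun z => (z.1 * z.2, z.1)
      left_inv := fun z => by simp
      right_inv := fun z => by simp }
  have he := e.hasSum_iff.2 h
  refine he.prod_fiberwise fun γ => ?_
  have hγ : ∀ h, p h * (μ (h⁻¹ * γ) * g (h * (h⁻¹ * γ))) = p h * μ (h⁻¹ * γ) * g γ := fun h => by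
    rw [mul_inv_cancel_left, mul_assoc]
  simpa only [Function.comp_apply, e, Equiv.coe_fn_mk, hγ, tsum_mul_right, conv]
    using (he.summable.prod_factor γ).hasSum

lemma IsProb.conv (hμ : IsProb μ) (hν : IsProb ν) : IsProb (conv μ ν) := by
  refine ⟨fun g => tsum_nonneg fun h => mul_nonneg (hμ.1 h) (hν.1 _), ?_⟩
  have hprod := hμ.2.mul hν.2 (hμ.2.summable.mul_of_nonneg hν.2.summable hμ.1 hν.1)
  simpa only [mul_one] using hasSum_conv_mul (g := fun _ => 1) (by simpa only [mul_one] using hprod)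

lemma isProb_convPow_s13 (hμ : IsProb μ) (n : ℕ) : IsProb (convPow μ n) := by
  induction n with
  | zero => exact ⟨fun g => by simp only [convPow]; split_ifs <;> simp, hasSum_ite_eq 1 1⟩
  | succ n ih => exact ih.conv hμ

lemma meanLE_convPow_zero (μ g : G → ℝ) : MeanLE (convPow μ 0) g (g 1) := by
  refine meanLE_of_hasSum ?_
  simpa [convPow] using hasSum_single (f := fun γ => convPow μ 0 γ * g γ) 1
    fun γ hγ => by simp [convPow, hγ]

lemma MeanLE.conv {g q : G → ℝ} {c : ℝ} (hp : ∀ h, 0 ≤ p h) (hμ : ∀ s, 0 ≤ μ s)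
    (hg : ∀ γ, 0 ≤ g γ) (hq : ∀ h, MeanLE μ (fun s => g (h * s)) (q h)) (hpq : MeanLE p q c) :
    MeanLE (conv p μ) g c := by
  let F : G × G → ℝ := fun z => p z.1 * (μ z.2 * g (z.1 * z.2))
  have hF : 0 ≤ F := fun z => mul_nonneg (hp _) (mul_nonneg (hμ _) (hg _))
  have hinner : MeanLE p (fun h => ∑' s, μ s * g (h * s)) c :=
    hpq.mono_left hp (fun h => tsum_nonneg fun s => mul_nonneg (hμ s) (hg _)) fun h => (hq h).2
  have hFs : Summable F := (summable_prod_of_nonneg hF).2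
    ⟨fun h => (hq h).1.mul_left (p h), by simpa only [F, tsum_mul_left] using hinner.1⟩
  refine (meanLE_of_hasSum (hasSum_conv_mul hFs.hasSum)).mono_right ?_
  rw [hFs.tsum_prod]
  simpa only [F, tsum_mul_left] using hinner.2

lemma meanLE_convPow (hμ : IsProb μ) {g : ℕ → G → ℝ} {K : ℝ} (hg : ∀ n γ, 0 ≤ g n γ)
    (hstep : ∀ n γ, MeanLE μ (fun s => g (n + 1) (γ * s)) (g n γ + K)) (n : ℕ) :
    MeanLE (convPow μ n) (g n) (g 0 1 + n * K) := by
  induction n with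
  | zero => simpa using meanLE_convPow_zero μ (g 0)
  | succ n ih =>
    have hn := isProb_convPow_s13 hμ n
    refine (MeanLE.conv hn.1 hμ.1 (hg _) (hstep n) (ih.add (hn.meanLE_const K))).mono_right ?_
    push_cast
    linarith

end Convolution

section SquareIntegrable

variable {S : Type*} {μ a c : S → ℝ}

lemma summable_mul_of_abs_le (hμ : Summable μ) {B : ℝ} (hc : ∀ s, |c s| ≤ B) :
    Summable fun s => μ s * c s := by
  refine Summable.of_norm_bounded (hμ.abs.mul_right B) fun s => ?_
  rw [norm_mul]
  exact mul_le_mul_of_nonneg_left (hc s) (norm_nonneg _)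

lemma summable_mul_of_summable_mul_sq (hμ0 : ∀ s, 0 ≤ μ s) (hμ : Summable μ)
    (ha : Summable fun s => μ s * a s ^ 2) : Summable fun s => μ s * a s := by
  refine Summable.of_norm_bounded (hμ.add ha) fun s => ?_
  have habs : |a s| ≤ 1 + a s ^ 2 := by nlinarith [sq_abs (a s), sq_nonneg (|a s| - 1)]
  rw [norm_mul, Real.norm_of_nonneg (hμ0 s)]
  exact (mul_le_mul_of_nonneg_left habs (hμ0 s)).trans_eq (by ring)

lemma hasSum_mul_add_sq (hμ : HasSum μ 1) {v : ℝ} (hc : HasSum (fun s => μ s * c s) 0)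
    (hc2 : HasSum (fun s => μ s * c s ^ 2) v) (x : ℝ) :
    HasSum (fun s => μ s * (x + c s) ^ 2) (x ^ 2 + v) := by
  have h := ((hμ.mul_right (x ^ 2)).add (hc.mul_right (2 * x))).add hc2
  rw [one_mul, zero_mul, add_zero] at h
  exact h.congr_fun fun s => by ring

end SquareIntegrable

section PoissonEquation

variable {S X : Type*} {μ : S → ℝ}

lemma summable_mul_comp_sub [Finite X] (hμ : Summable μ) (σ : S → Equiv.Perm X) (f : X → ℝ)
    (x : X) : Summable fun s => μ s * (f (σ s x) - f x) := by
  obtain ⟨B, hB⟩ := Finite.bddAbove_range fun y => |f y - f x|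
  exact summable_mul_of_abs_le hμ fun s => hB ⟨σ s x, rfl⟩

/-- The generator `f ↦ (x ↦ ∑ₛ μ(s) (f(σₛ x) - f(x)))` of the random walk on a finite set `X` which
applies the permutation `σₛ` with weight `μ(s)`. -/
noncomputable def generator [Finite X] (hμ : Summable μ) (σ : S → Equiv.Perm X) :
    (X → ℝ) →ₗ[ℝ] (X → ℝ) where
  toFun f x := ∑' s, μ s * (f (σ s x) - f x)
  map_add' f g := funext fun x => by
    refine .trans (tsum_congr fun s => ?_)
      ((summable_mul_comp_sub hμ σ f x).tsum_add (summable_mul_comp_sub hμ σ g x))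
    simp only [Pi.add_apply]
    ring
  map_smul' c f := funext fun x => by
    refine .trans (tsum_congr fun s => ?_) tsum_mul_left
    simp only [Pi.smul_apply, smul_eq_mul, RingHom.id_apply]
    ring

variable (hμ : Summable μ) (σ : S → Equiv.Perm X)

lemma hasSum_generator [Finite X] (f : X → ℝ) (x : X) :
    HasSum (fun s => μ s * (f (σ s x) - f x)) (generator hμ σ f x) :=
  (summable_mul_comp_sub hμ σ f x).hasSum

lemma sum_generator [Fintype X] (f : X → ℝ) : ∑ x, generator hμ σ f x = 0 := by
  have h := hasSum_sum fun x (_ : x ∈ Finset.univ) => hasSum_generator hμ σ f x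
  have hzero : ∀ s, ∑ x, μ s * (f (σ s x) - f x) = 0 := fun s => by
    rw [← Finset.mul_sum, Finset.sum_sub_distrib, Equiv.sum_comp (σ s) f, sub_self, mul_zero]
  simp only [hzero] at h
  exact h.unique hasSum_zero

lemma hasSum_energy [Fintype X] (f : X → ℝ) :
    HasSum (fun s => μ s * ∑ x, (f (σ s x) - f x) ^ 2) (-2 * ∑ x, f x * generator hμ σ f x) := by
  have h := (hasSum_sum fun x (_ : x ∈ Finset.univ) =>
    (hasSum_generator hμ σ f x).mul_left (f x)).mul_left (-2)
  refine h.congr_fun fun s => ?_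
  have hexpand : ∀ x, (f (σ s x) - f x) ^ 2 =
      (f (σ s x) ^ 2 - f x ^ 2) + -2 * (f x * (f (σ s x) - f x)) := fun x => by ring
  simp only [hexpand, Finset.sum_add_distrib, Finset.sum_sub_distrib,
    Equiv.sum_comp (σ s) fun x => f x ^ 2, sub_self, zero_add, Finset.mul_sum]
  exact Finset.sum_congr rfl fun x _ => by ring

lemma comp_eq_of_generator_eq_zero [Finite X] (hμ0 : ∀ s, 0 ≤ μ s) {f : X → ℝ}
    (hf : generator hμ σ f = 0) {s : S} (hs : 0 < μ s) (x : X) : f (σ s x) = f x := by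
  have := Fintype.ofFinite X
  have henergy := hasSum_energy hμ σ f
  simp only [hf, Pi.zero_apply, mul_zero, Finset.sum_const_zero] at henergy
  have hsq : ∀ s, 0 ≤ ∑ x, (f (σ s x) - f x) ^ 2 := fun s =>
    Finset.sum_nonneg fun x _ => sq_nonneg _
  have hall := (hasSum_zero_iff_of_nonneg fun s => mul_nonneg (hμ0 s) (hsq s)).1 henergy
  have hsum := (mul_eq_zero.1 (congrFun hall s)).resolve_left hs.ne'
  have hx := (Finset.sum_eq_zero_iff_of_nonneg fun x _ => sq_nonneg _).1 hsum x (Finset.mem_univ x)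
  exact sub_eq_zero.1 (sq_eq_zero_iff.1 hx)

lemma exists_generator_eq [Fintype X] (hμ0 : ∀ s, 0 ≤ μ s)
    (hσ : ∀ f : X → ℝ, (∀ s, 0 < μ s → ∀ x, f (σ s x) = f x) → ∀ x y, f x = f y)
    {b : X → ℝ} (hb : ∑ x, b x = 0) : ∃ f, generator hμ σ f = b := by
  -- The generator is injective on the space of functions with sum zero, which it preserves.
  let W : Submodule ℝ (X → ℝ) := LinearMap.ker (∑ x, LinearMap.proj x)
  have mem_W : ∀ f : X → ℝ, f ∈ W ↔ ∑ x, f x = 0 := fun f => by simp [W]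
  let L : W →ₗ[ℝ] W :=
    (generator hμ σ).restrict fun f _ => (mem_W _).2 (sum_generator hμ σ f)
  have hinj : Function.Injective L := by
    refine (injective_iff_map_eq_zero L).2 fun ⟨f, hfW⟩ hLf => Subtype.ext (funext fun x => ?_)
    have hf : generator hμ σ f = 0 := congrArg Subtype.val hLf
    have hconst := hσ f (fun s hs => comp_eq_of_generator_eq_zero hμ σ hμ0 hf hs)
    have hcard : (Fintype.card X : ℝ) * f x = 0 := by
      rw [← (mem_W f).1 hfW, Finset.sum_congr rfl fun y _ => hconst y x, Finset.sum_const,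
        Finset.card_univ, nsmul_eq_mul]
    have : Nonempty X := ⟨x⟩
    exact (mul_eq_zero.1 hcard).resolve_left (Nat.cast_ne_zero.2 Fintype.card_ne_zero)
  obtain ⟨f, hf⟩ := LinearMap.injective_iff_surjective.1 hinj ⟨b, (mem_W b).2 hb⟩
  exact ⟨f, congrArg Subtype.val hf⟩

end PoissonEquation

section RandomWalk

variable {Γ : Type*} [Group Γ] {Λ : Subgroup Γ}

namespace RepSystem

variable (R : RepSystem Λ)

lemma rep_rep_mul (γ s : Γ) : R.rep (R.rep γ * s) = R.rep (γ * s) := by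
  have h := R.rep_coset (R.rep γ * s) _ (R.rep_spec γ)
  rwa [mul_assoc, inv_mul_cancel_left, eq_comm] at h

lemma rep_eq_rep_iff {γ δ : Γ} : R.rep γ = R.rep δ ↔ γ * δ⁻¹ ∈ Λ := by
  refine ⟨fun h => ?_, fun h => by simpa using R.rep_coset δ _ h⟩
  have hmem := Λ.mul_mem (R.rep_spec γ) (Λ.inv_mem (R.rep_spec δ))
  simpa [h, mul_assoc] using hmem

/-- The representative of the coset `Λγ`, as an element of the finite type `R.Δ`. -/
def proj (γ : Γ) : R.Δ := ⟨R.rep γ, R.rep_mem γ⟩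

lemma proj_coe (x : R.Δ) : R.proj x = x :=
  Subtype.ext (R.rep_idem x x.2)

lemma proj_of_mem {x : Γ} (hx : x ∈ R.Δ) : R.proj x = ⟨x, hx⟩ :=
  R.proj_coe ⟨x, hx⟩

lemma proj_rep (γ : Γ) : R.proj (R.rep γ) = R.proj γ :=
  R.proj_coe (R.proj γ)

lemma proj_proj_mul (γ s : Γ) : R.proj (R.proj γ * s) = R.proj (γ * s) :=
  Subtype.ext (R.rep_rep_mul γ s)

/-- The permutation `x ↦ x^s` of the representatives. -/
def perm (s : Γ) : Equiv.Perm R.Δ where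
  toFun x := R.proj (x * s)
  invFun x := R.proj (x * s⁻¹)
  left_inv x := by simp only [proj_proj_mul, mul_inv_cancel_right, proj_coe]
  right_inv x := by simp only [proj_proj_mul, inv_mul_cancel_right, proj_coe]

lemma coe_perm (s : Γ) (x : R.Δ) : (R.perm s x : Γ) = R.rep (x * s) :=
  rfl

lemma perm_proj (γ s : Γ) : R.perm s (R.proj γ) = R.proj (γ * s) :=
  R.proj_proj_mul γ s

lemma card_eq_index : R.Δ.card = Λ.index := by
  rw [Subgroup.index, ← Nat.card_eq_finsetCard]
  refine Nat.card_congr (Equiv.ofBijective (fun x : R.Δ => (((x : Γ)⁻¹ : Γ) : Γ ⧸ Λ)) ⟨?_, ?_⟩)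
  · intro x y hxy
    rw [← R.proj_coe x, ← R.proj_coe y]
    exact Subtype.ext (R.rep_eq_rep_iff.2 (by simpa using QuotientGroup.eq.1 hxy))
  · intro q
    obtain ⟨γ, rfl⟩ := QuotientGroup.mk_surjective q
    exact ⟨R.proj γ⁻¹, QuotientGroup.eq.2 (by simpa [proj] using Λ.inv_mem (R.rep_spec γ⁻¹))⟩

lemma index_ne_zero (R : RepSystem Λ) : (Λ.index : ℝ) ≠ 0 := by
  rw [← R.card_eq_index]
  exact Nat.cast_ne_zero.2 (Finset.card_ne_zero_of_mem R.one_mem)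

lemma exists_forall_abs_rep_le (f : Γ → ℝ) : ∃ B, ∀ γ, |f (R.rep γ)| ≤ B := by
  obtain ⟨B, hB⟩ := (R.Δ.image fun x => |f x|).exists_le
  exact ⟨B, fun γ => hB _ (Finset.mem_image_of_mem _ (R.rep_mem γ))⟩

lemma eq_of_comp_perm_eq {T : Set Γ} (hT : ∀ γ, ∃ v ∈ Λ, v * γ ∈ Subgroup.closure T)
    {f : R.Δ → ℝ} (hf : ∀ s ∈ T, ∀ x, f (R.perm s x) = f x) (x y : R.Δ) : f x = f y := by
  have hinv : ∀ g ∈ Subgroup.closure T, ∀ γ, f (R.proj (γ * g)) = f (R.proj γ) := fun g hg => by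
    induction hg using Subgroup.closure_induction with
    | mem s hs => exact fun γ => by rw [← R.perm_proj, hf s hs]
    | one => exact fun γ => by rw [mul_one]
    | mul g h _ _ hg hh => exact fun γ => by rw [← mul_assoc, hh, hg]
    | inv g _ hg => exact fun γ => by rw [← hg, inv_mul_cancel_right]
  have hone : ∀ x : R.Δ, f x = f (R.proj 1) := fun x => by
    obtain ⟨v, hv, hvx⟩ := hT x
    have hproj : R.proj (v * x) = x := (Subtype.ext (R.rep_coset x v hv)).trans (R.proj_coe x)
    simpa [hproj] using hinv _ hvx 1
  rw [hone x, hone y]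

end RepSystem

section OneForms

variable {R : RepSystem Λ} {μ : Γ → ℝ} {ω ω' u : Γ → Γ → ℝ}

lemma chi_eq : chi R μ ω = (Λ.index : ℝ)⁻¹ * ∑ x ∈ R.Δ, ∑' s, μ s * ω x s := by
  simp only [chi, Finset.mul_sum, ← tsum_mul_left]
  exact Finset.sum_congr rfl fun x _ => tsum_congr fun s => by ring

lemma sum_tsum_eq : ∑ x ∈ R.Δ, ∑' s, μ s * ω x s = Λ.index * chi R μ ω := by
  rw [chi_eq, mul_inv_cancel_left₀ R.index_ne_zero]

lemma sqInt_iff : SqInt R μ ω ↔ ∀ x ∈ R.Δ, Summable fun s => μ s * ω x s ^ 2 := by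
  simp only [SqInt, div_mul_eq_mul_div, summable_div_const_iff R.index_ne_zero]

lemma sqInt_of_abs_le (hμ : Summable μ) {B : ℝ} (hω : ∀ x ∈ R.Δ, ∀ s, |ω x s| ≤ B) :
    SqInt R μ ω :=
  sqInt_iff.2 fun x hx => summable_mul_of_abs_le hμ (B := B ^ 2) fun s => by
    rw [abs_pow]
    exact pow_le_pow_left₀ (abs_nonneg _) (hω x hx s) 2

lemma sqInt_dd (hμ : Summable μ) (f : Γ → ℝ) : SqInt R μ (dd R f) := by
  obtain ⟨B, hB⟩ := R.exists_forall_abs_rep_le f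
  refine sqInt_of_abs_le hμ (B := B + B) fun x hx s => (abs_sub _ _).trans ?_
  exact add_le_add (hB _) (by simpa only [R.rep_idem x hx] using hB x)

lemma SqInt.sub (hμ : ∀ s, 0 ≤ μ s) (hω : SqInt R μ ω) (hω' : SqInt R μ ω') :
    SqInt R μ (ω - ω') := by
  rw [sqInt_iff] at *
  intro x hx
  refine (((hω x hx).add (hω' x hx)).mul_left 2).of_nonneg_of_le
    (fun s => mul_nonneg (hμ s) (sq_nonneg _)) fun s => ?_
  have hsq : (ω x s - ω' x s) ^ 2 ≤ 2 * (ω x s ^ 2 + ω' x s ^ 2) := by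
    nlinarith [sq_nonneg (ω x s + ω' x s)]
  exact (mul_le_mul_of_nonneg_left hsq (hμ s)).trans_eq (by ring)

lemma SqInt.summable_mul (hω : SqInt R μ ω) (hμ0 : ∀ s, 0 ≤ μ s) (hμ : Summable μ) {x : Γ}
    (hx : x ∈ R.Δ) : Summable fun s => μ s * ω x s :=
  summable_mul_of_summable_mul_sq hμ0 hμ (sqInt_iff.1 hω x hx)

lemma chi_eq_of_forall_tsum_eq {k : ℝ} (h : ∀ x ∈ R.Δ, ∑' s, μ s * ω x s = k) :
    chi R μ ω = k := by
  rw [chi_eq, Finset.sum_congr rfl h, Finset.sum_const, R.card_eq_index, nsmul_eq_mul,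
    inv_mul_cancel_left₀ R.index_ne_zero]

lemma SqInt.exists_harmonic_sub_dd (hω : SqInt R μ ω) (hμ : IsProb μ)
    (hgen : ∀ γ, ∃ v ∈ Λ, v * γ ∈ Subgroup.closure {s | 0 < μ s}) :
    ∃ f : Γ → ℝ, Harmonic R μ (ω - dd R f) ∧ chi R μ (ω - dd R f) = chi R μ ω := by
  let b : R.Δ → ℝ := fun x => ∑' s, μ s * ω x s - chi R μ ω
  have hb : ∑ x, b x = 0 := by
    rw [Finset.sum_sub_distrib, Finset.sum_coe_sort R.Δ fun x => ∑' s, μ s * ω x s, sum_tsum_eq]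
    simp [R.card_eq_index]
  obtain ⟨f, hf⟩ := exists_generator_eq hμ.2.summable R.perm hμ.1
    (fun f hf => R.eq_of_comp_perm_eq hgen hf) hb
  let F : Γ → ℝ := fun γ => f (R.proj γ)
  have hF : ∀ x ∈ R.Δ, HasSum (fun s => μ s * dd R F x s) (∑' s, μ s * ω x s - chi R μ ω) := by
    intro x hx
    have h := hasSum_generator hμ.2.summable R.perm f ⟨x, hx⟩
    rw [hf] at h
    refine h.congr_fun fun s => ?_
    simp only [dd, F, R.proj_rep, R.proj_of_mem hx]
    rfl
  have hmean : ∀ x ∈ R.Δ, ∑' s, μ s * (ω - dd R F) x s = chi R μ ω := fun x hx => by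
    have h := (hω.summable_mul hμ.1 hμ.2.summable hx).hasSum.sub (hF x hx)
    simp only [← mul_sub, sub_sub_cancel] at h
    exact h.tsum_eq
  have hchi := chi_eq_of_forall_tsum_eq hmean
  have hsq := hω.sub hμ.1 (sqInt_dd hμ.2.summable F)
  exact ⟨F, ⟨hsq, fun x hx => (hmean x hx).trans hchi.symm⟩, hchi⟩

/-- The function `A` on `Γ` integrates the form `ω` along the paths of the random walk on `Γ`: its
increment along the step `γ ↦ γs` is the value of `ω` on the projected edge. -/
def IsPrimitive (R : RepSystem Λ) (ω : Γ → Γ → ℝ) (A : Γ → ℝ) : Prop :=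
  ∀ γ s, A (γ * s) = A γ + ω (R.rep γ) s

lemma IsPrimitive.sub_dd {A : Γ → ℝ} (hA : IsPrimitive R ω A) (f : Γ → ℝ) (a : ℝ) :
    IsPrimitive R (ω - dd R f) fun γ => A γ - (f (R.rep γ) - a) := fun γ s => by
  simp only [hA γ s, Pi.sub_apply, dd, R.rep_rep_mul]
  ring

lemma Harmonic.exists_meanLE_sq (hu : Harmonic R μ u) (hμ : IsProb μ) :
    ∃ K : ℝ, 0 ≤ K ∧ ∀ M : Γ → ℝ, IsPrimitive R u M → ∀ n : ℕ,
      MeanLE (convPow μ n) (fun γ => (M γ - n * chi R μ u) ^ 2) (M 1 ^ 2 + n * K) := by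
  set χ := chi R μ u
  let V : Γ → ℝ := fun x => ∑' s, μ s * (u x s - χ) ^ 2
  have hcentered : ∀ x ∈ R.Δ, HasSum (fun s => μ s * (u x s - χ)) 0 := fun x hx => by
    have h := (hu.1.summable_mul hμ.1 hμ.2.summable hx).hasSum.sub (hμ.2.mul_right χ)
    rw [hu.2 x hx, one_mul, sub_self] at h
    simpa only [mul_sub] using h
  have hvar : ∀ x ∈ R.Δ, HasSum (fun s => μ s * (u x s - χ) ^ 2) (V x) := fun x hx =>
    (sqInt_iff.1 (hu.1.sub hμ.1 (sqInt_of_abs_le (ω := fun _ _ => χ) hμ.2.summable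
      fun _ _ _ => le_rfl)) x hx).hasSum
  obtain ⟨K, hK⟩ := R.exists_forall_abs_rep_le V
  refine ⟨K, (abs_nonneg _).trans (hK 1), fun M hM n => ?_⟩
  have hstep : ∀ n γ, MeanLE μ (fun s => (M (γ * s) - (n + 1 : ℕ) * χ) ^ 2)
      ((M γ - n * χ) ^ 2 + K) := fun n γ => by
    have hx := R.rep_mem γ
    have h := hasSum_mul_add_sq hμ.2 (hcentered _ hx) (hvar _ hx) (M γ - n * χ)
    have hincr : ∀ s, M (γ * s) - (n + 1 : ℕ) * χ = (M γ - n * χ) + (u (R.rep γ) s - χ) :=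
      fun s => by rw [hM γ s]; push_cast; ring
    simp only [hincr]
    exact (meanLE_of_hasSum h).mono_right (by gcongr; exact (le_abs_self _).trans (hK γ))
  simpa using meanLE_convPow hμ (g := fun n γ => (M γ - n * χ) ^ 2) (fun _ _ => sq_nonneg _) hstep n

lemma SqInt.exists_meanLE_sq_primitive (hω : SqInt R μ ω) (hμ : IsProb μ)
    (hgen : ∀ γ, ∃ v ∈ Λ, v * γ ∈ Subgroup.closure {s | 0 < μ s})
    {A : Γ → ℝ} (hA : IsPrimitive R ω A) (hA1 : A 1 = 0) :
    ∃ C : ℝ, 0 ≤ C ∧ ∀ n : ℕ,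
      MeanLE (convPow μ n) (fun γ => (A γ - n * chi R μ ω) ^ 2) (C * n) := by
  obtain ⟨f, hharm, hchi⟩ := hω.exists_harmonic_sub_dd hμ hgen
  obtain ⟨K, hK0, hK⟩ := hharm.exists_meanLE_sq hμ
  obtain ⟨B, hB⟩ := R.exists_forall_abs_rep_le fun x => f x - f (R.rep 1)
  have hM := hK _ (hA.sub_dd f (f (R.rep 1)))
  simp only [hA1, hchi, sub_self, zero_pow two_ne_zero, zero_add] at hM
  refine ⟨2 * K + 2 * B ^ 2, by positivity, fun n => ?_⟩
  rcases n.eq_zero_or_pos with rfl | hn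
  · exact (meanLE_convPow_zero μ _).mono_right (by simp [hA1])
  have hprob := isProb_convPow_s13 hμ n
  have hbound : ∀ γ, (A γ - n * chi R μ ω) ^ 2 ≤
      2 * (A γ - (f (R.rep γ) - f (R.rep 1)) - n * chi R μ ω) ^ 2 + 2 * B ^ 2 := fun γ => by
    have hcorr : (f (R.rep γ) - f (R.rep 1)) ^ 2 ≤ B ^ 2 :=
      sq_le_sq.2 ((hB γ).trans (le_abs_self B))
    nlinarith [sq_nonneg (A γ - 2 * (f (R.rep γ) - f (R.rep 1)) - n * chi R μ ω)]
  refine ((((hM n).const_mul zero_le_two).add (hprob.meanLE_const (2 * B ^ 2))).mono_left hprob.1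
    (fun _ => sq_nonneg _) hbound).mono_right ?_
  have hn1 : (1 : ℝ) ≤ n := Nat.one_le_cast.2 hn
  nlinarith [sq_nonneg B]

end OneForms

section WordLength

variable {G : Type*} [Group G] {S₀ : Finset G}

lemma exists_list_length_eq_wordLength (hsym : ∀ s ∈ S₀, s⁻¹ ∈ S₀)
    (hgen : Subgroup.closure (S₀ : Set G) = ⊤) (g : G) :
    ∃ l : List G, (∀ s ∈ l, s ∈ S₀) ∧ l.length = wordLength S₀ g ∧ l.prod = g := by
  refine Nat.sInf_mem (s := {n | ∃ l : List G, (∀ s ∈ l, s ∈ S₀) ∧ l.length = n ∧ l.prod = g}) ?_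
  have hinv : (S₀ : Set G)⁻¹ ⊆ S₀ := fun s hs => by simpa using hsym _ hs
  have hg : g ∈ Submonoid.closure (S₀ : Set G) := by
    rw [← Set.union_eq_self_of_subset_right hinv, ← Subgroup.closure_toSubmonoid, hgen]
    exact Submonoid.mem_top g
  obtain ⟨l, hl, hlg⟩ := Submonoid.exists_list_of_mem_closure hg
  exact ⟨l.length, l, hl, rfl, hlg⟩

lemma le_mul_wordLength (hsym : ∀ s ∈ S₀, s⁻¹ ∈ S₀) (hgen : Subgroup.closure (S₀ : Set G) = ⊤)
    {N : G → ℝ} (hone : N 1 ≤ 0) (hmul : ∀ g h, N (g * h) ≤ N g + N h) {L : ℝ}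
    (hL : ∀ s ∈ S₀, N s ≤ L) (g : G) : N g ≤ L * wordLength S₀ g := by
  obtain ⟨l, hl, hlen, rfl⟩ := exists_list_length_eq_wordLength hsym hgen g
  rw [← hlen]
  clear hlen
  induction l with
  | nil => simpa using hone
  | cons s l ih =>
    have hs := hL s (hl s List.mem_cons_self)
    have hl' := ih fun t ht => hl t (List.mem_cons_of_mem s ht)
    rw [List.prod_cons, List.length_cons]
    push_cast
    linarith [hmul s l.prod]

end WordLength

section Cocycle

variable {m : ℕ} (ψ : Λ ≃* Multiplicative (Fin m → ℤ)) (R : RepSystem Λ)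

lemma Phi_mul (γ s : Γ) : Phi ψ R (γ * s) = Phi ψ R γ + cocycle ψ R (R.rep γ) s := by
  unfold Phi cocycle
  rw [← toAdd_mul, ← map_mul]
  congr 2
  exact Subtype.ext (by simp [R.rep_rep_mul, mul_assoc])

lemma Phi_eq_zero_of_mem {x : Γ} (hx : x ∈ R.Δ) : Phi ψ R x = 0 := by
  have h : (⟨x * (R.rep x)⁻¹, R.rep_spec x⟩ : Λ) = 1 := Subtype.ext (by simp [R.rep_idem x hx])
  rw [Phi, h, map_one, toAdd_one]

lemma cocycle_one {x : Γ} (hx : x ∈ R.Δ) : cocycle ψ R x 1 = 0 := by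
  rw [← mul_one x] at hx
  exact Phi_eq_zero_of_mem ψ R hx

lemma cocycle_mul (x s t : Γ) :
    cocycle ψ R x (s * t) = cocycle ψ R x s + cocycle ψ R (R.rep (x * s)) t := by
  have h := Phi_mul ψ R (x * s) t
  rwa [mul_assoc] at h

lemma isPrimitive_Phi (i : Fin m) :
    IsPrimitive R (fun x s => (cocycle ψ R x s i : ℝ)) fun γ => (Phi ψ R γ i : ℝ) :=
  fun γ s => by simp only [Phi_mul, Pi.add_apply, Int.cast_add]

lemma chi_cocycle (μ : Γ → ℝ) (i : Fin m) :
    chi R μ (fun x s => (cocycle ψ R x s i : ℝ)) = drift ψ R μ i :=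
  chi_eq

lemma exists_abs_cocycle_le_wordLength {S₀ : Finset Γ} (hsym : ∀ s ∈ S₀, s⁻¹ ∈ S₀)
    (hgen : Subgroup.closure (S₀ : Set Γ) = ⊤) (i : Fin m) :
    ∃ L : ℝ, ∀ x ∈ R.Δ, ∀ s, |(cocycle ψ R x s i : ℝ)| ≤ L * wordLength S₀ s := by
  -- Summing over `x` makes the size of the cocycle subadditive, since `x ↦ x^g` permutes `Δ`.
  let N : Γ → ℝ := fun s => ∑ x : R.Δ, |(cocycle ψ R x s i : ℝ)|
  have hone : N 1 = 0 := Finset.sum_eq_zero fun x _ => by simp [cocycle_one ψ R x.2]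
  have hmul : ∀ g h, N (g * h) ≤ N g + N h := fun g h => by
    calc N (g * h)
        ≤ ∑ x : R.Δ, (|(cocycle ψ R x g i : ℝ)| + |(cocycle ψ R (R.perm g x) h i : ℝ)|) :=
          Finset.sum_le_sum fun x _ => by
            rw [R.coe_perm, cocycle_mul, Pi.add_apply, Int.cast_add]
            exact abs_add_le _ _
      _ = N g + N h := by
          rw [Finset.sum_add_distrib,
            Equiv.sum_comp (R.perm g) fun x : R.Δ => |(cocycle ψ R x h i : ℝ)|]
  obtain ⟨L, hL⟩ := (S₀.image N).exists_le
  have hword := le_mul_wordLength hsym hgen hone.le hmul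
    fun s hs => hL _ (Finset.mem_image_of_mem N hs)
  have hle : ∀ x ∈ R.Δ, ∀ s, |(cocycle ψ R x s i : ℝ)| ≤ N s := fun x hx s => by
    simp only [N, Finset.sum_coe_sort R.Δ fun x => |(cocycle ψ R x s i : ℝ)|]
    exact Finset.single_le_sum (f := fun x => |(cocycle ψ R x s i : ℝ)|)
      (fun _ _ => abs_nonneg _) hx
  exact ⟨L, fun x hx s => (hle x hx s).trans (hword s)⟩

lemma sqInt_cocycle {μ : Γ → ℝ} (hμ : ∀ s, 0 ≤ μ s) (hmom : FinSecondMoment μ) (i : Fin m) :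
    SqInt R μ fun x s => (cocycle ψ R x s i : ℝ) := by
  obtain ⟨S₀, hsym, hgen, hsum⟩ := hmom
  obtain ⟨L, hL⟩ := exists_abs_cocycle_le_wordLength ψ R hsym hgen i
  refine sqInt_iff.2 fun x hx => (hsum.mul_left (L ^ 2)).of_nonneg_of_le
    (fun s => mul_nonneg (hμ s) (sq_nonneg _)) fun s => ?_
  calc μ s * (cocycle ψ R x s i : ℝ) ^ 2
      ≤ μ s * (L * wordLength S₀ s) ^ 2 :=
        mul_le_mul_of_nonneg_left (sq_le_sq.2 ((hL x hx s).trans (le_abs_self _))) (hμ s)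
    _ = L ^ 2 * ((wordLength S₀ s : ℝ) ^ 2 * μ s) := by ring

end Cocycle

lemma Nondeg.subgroupClosure_eq_top {μ : Γ → ℝ} (hnd : Nondeg μ) :
    Subgroup.closure {s | 0 < μ s} = ⊤ := by
  have hle : Subsemigroup.closure {s | 0 < μ s} ≤
      (Subgroup.closure {s | 0 < μ s}).toSubmonoid.toSubsemigroup :=
    Subsemigroup.closure_le.2 Subgroup.subset_closure
  exact eq_top_iff.2 fun g _ => hle (hnd g)

theorem concentration_around_drift_general {m : ℕ} (ψ : Λ ≃* Multiplicative (Fin m → ℤ))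
    (R : RepSystem Λ) {μ : Γ → ℝ} (hμ : IsProb μ)
    (hgen : ∀ γ, ∃ v ∈ Λ, v * γ ∈ Subgroup.closure {s | 0 < μ s}) (hmom : FinSecondMoment μ) :
    ∃ C : ℝ, 0 < C ∧ ∀ (n : ℕ) (r : ℝ), 0 < r →
      (∑' γ : {γ : Γ //
          r ≤ Real.sqrt (∑ i, ((Phi ψ R γ i : ℝ) - n * drift ψ R μ i) ^ 2)},
        convPow μ n (γ : Γ)) ≤ C * n / r ^ 2 := by
  have hcoord : ∀ i, ∃ C : ℝ, 0 ≤ C ∧ ∀ n : ℕ, MeanLE (convPow μ n)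
      (fun γ => ((Phi ψ R γ i : ℝ) - n * drift ψ R μ i) ^ 2) (C * n) := fun i => by
    rw [← chi_cocycle]
    exact (sqInt_cocycle ψ R hμ.1 hmom i).exists_meanLE_sq_primitive hμ hgen
      (isPrimitive_Phi ψ R i) (by simp [Phi_eq_zero_of_mem ψ R R.one_mem])
  choose C hC0 hC using hcoord
  have hC_sum : 0 ≤ ∑ i, C i := Finset.sum_nonneg fun i _ => hC0 i
  refine ⟨∑ i, C i + 1, by linarith, fun n r hr => ?_⟩
  have hprob := isProb_convPow_s13 hμ n
  have hnorm : MeanLE (convPow μ n)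
      (fun γ => ∑ i, ((Phi ψ R γ i : ℝ) - n * drift ψ R μ i) ^ 2) ((∑ i, C i + 1) * n) :=
    (MeanLE.finset_sum fun i _ => hC i n).mono_right (by rw [← Finset.sum_mul]; gcongr; linarith)
  have hnorm_nonneg (γ : Γ) : 0 ≤ ∑ i, ((Phi ψ R γ i : ℝ) - n * drift ψ R μ i) ^ 2 :=
    Finset.sum_nonneg fun i _ => sq_nonneg _
  exact hnorm.tsum_subtype_le_div hprob.1 hprob.2.summable hnorm_nonneg (pow_pos hr 2)
    fun γ hγ => (Real.le_sqrt hr.le (hnorm_nonneg γ)).1 hγ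

end RandomWalk

/-- Concentration: `P(‖Φ(w_n) − nζ‖ ≥ r) ≤ C·n/r²`. -/
theorem concentration_around_drift
    {Γ : Type*} [Group Γ] [Countable Γ] {Λ : Subgroup Γ} (hN : Λ.Normal)
    (hI : Λ.index ≠ 0) {m : ℕ} (hm : 1 ≤ m) (ψ : Λ ≃* Multiplicative (Fin m → ℤ))
    (R : RepSystem Λ) (μ : Γ → ℝ) (hμ : IsProb μ) (hnd : Nondeg μ)
    (hmom : FinSecondMoment μ) :
    ∃ C : ℝ, 0 < C ∧ ∀ (n : ℕ) (r : ℝ), 0 < r →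
      (∑' γ : {γ : Γ //
          r ≤ Real.sqrt (∑ i, ((Phi ψ R γ i : ℝ) - n * drift ψ R μ i) ^ 2)},
        convPow μ n (γ : Γ)) ≤ C * n / r ^ 2 :=
  concentration_around_drift_general ψ R hμ
    (fun _ => ⟨1, Λ.one_mem, by simp [hnd.subgroupClosure_eq_top]⟩) hmom

end NSVA
end
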